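/- Let k ≥ 3 with k ∉ {4,5}. For all sufficiently large n, if G is an n-vertex W_{2k+1}-free simple graph attaining the maximum spectral radius among all n-vertex W_{2k+1}-free graphs, then there is a partition V(G) = L ⊔ R with |L| = n/2 + s and |R| = n/2 − s for some s with |s| ≤ 1, such that every vertex of L is adjacent to every vertex of R, the induced subgraph G[L] belongs to 𝒰_{k,|L|} (it is (k−1)-regular or nearly (k−1)-regular and contains no path on 2k−1 vertices), and the induced subgraph G[R] contains exactly one edge. -/

import Mathlib

/-- The wheel graph on `t` vertices: vertex `0` joined to every vertex of the
cycle `1, 2, …, t-1` (with `t-1` adjacent to `1`). -/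
def wheelGraph (t : ℕ) : SimpleGraph (Fin t) where
  Adj a b := a ≠ b ∧ (a.val = 0 ∨ b.val = 0 ∨ a.val + 1 = b.val ∨ b.val + 1 = a.val ∨
      (a.val = 1 ∧ b.val = t - 1) ∨ (b.val = 1 ∧ a.val = t - 1))
  symm := by
    constructor
    intro a b h
    exact ⟨h.1.symm, by tauto⟩
  loopless := by
    constructor
    intro a h
    exact h.1 rfl

/-- `G` contains a copy of `F`, i.e. a subgraph isomorphic to `F`. -/
def ContainsCopy {α β : Type*} (F : SimpleGraph α) (G : SimpleGraph β) : Prop :=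
  ∃ f : α ↪ β, ∀ a b, F.Adj a b → G.Adj (f a) (f b)

/-- `G` is `W_t`-free: it contains no subgraph isomorphic to the wheel on `t` vertices. -/
def WheelFree (t : ℕ) {n : ℕ} (G : SimpleGraph (Fin n)) : Prop :=
  ¬ ContainsCopy (wheelGraph t) G

/-- The spectral radius of `G`: the largest eigenvalue of its adjacency matrix. -/
noncomputable def lam1 {n : ℕ} (G : SimpleGraph (Fin n)) : ℝ := by
  classical
  exact sSup {μ : ℝ | Module.End.HasEigenvalue (Matrix.toLin' (G.adjMatrix ℝ)) μ}

/-- The number of edges of a graph on a finite vertex type. -/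
noncomputable def edgeCount {V : Type*} [Fintype V] (G : SimpleGraph V) : ℕ := by
  classical
  exact G.edgeFinset.card

/-- The degree of a vertex. -/
noncomputable def deg {n : ℕ} (G : SimpleGraph (Fin n)) (v : Fin n) : ℕ := by
  classical
  exact G.degree v

/-- The number of neighbours of `v` inside the set `A`. -/
noncomputable def degIn {n : ℕ} (G : SimpleGraph (Fin n)) (A : Finset (Fin n)) (v : Fin n) : ℕ := by
  classical
  exact (A.filter fun u => G.Adj v u).card

/-- The number of edges of `G` with one endpoint in `S` and the other outside `S`. -/
noncomputable def cutCount {n : ℕ} (G : SimpleGraph (Fin n)) (S : Finset (Fin n)) : ℕ := by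
  classical
  exact ((Finset.univ : Finset (Fin n × Fin n)).filter
    fun p => G.Adj p.1 p.2 ∧ p.1 ∈ S ∧ p.2 ∉ S).card

/-- `(S, T)` is a maximum cut of `G`. -/
def IsMaxCut {n : ℕ} (G : SimpleGraph (Fin n)) (S T : Finset (Fin n)) : Prop :=
  T = Sᶜ ∧ ∀ S' : Finset (Fin n), cutCount G S' ≤ cutCount G S

/-- `G` attains the maximum spectral radius among all `n`-vertex `W_t`-free graphs. -/
def IsSpexWheel (t : ℕ) {n : ℕ} (G : SimpleGraph (Fin n)) : Prop :=
  WheelFree t G ∧ ∀ H : SimpleGraph (Fin n), WheelFree t H → lam1 H ≤ lam1 G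

/-- `G` attains the maximum number of edges among all `n`-vertex `W_t`-free graphs. -/
def IsExWheel (t : ℕ) {n : ℕ} (G : SimpleGraph (Fin n)) : Prop :=
  WheelFree t G ∧ ∀ H : SimpleGraph (Fin n), WheelFree t H → edgeCount H ≤ edgeCount G


section SpecPart
open scoped Classical
open Finset

/-- neighbours of a vertex as a finset -/
noncomputable def nb {n : ℕ} (G : SimpleGraph (Fin n)) (v : Fin n) : Finset (Fin n) :=
  univ.filter (fun w => G.Adj v w)

theorem mem_nb {n : ℕ} {G : SimpleGraph (Fin n)} {v w : Fin n} : w ∈ nb G v ↔ G.Adj v w := by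
  simp [nb]

theorem adj_mulVec_eq {n : ℕ} (G : SimpleGraph (Fin n)) (y : Fin n → ℝ) (v : Fin n) :
    (G.adjMatrix ℝ).mulVec y v = ∑ w ∈ nb G v, y w := by
  rw [SimpleGraph.adjMatrix_mulVec_apply]
  apply Finset.sum_congr _ (fun _ _ => rfl)
  ext w; simp [nb]

theorem eig_bdd {n : ℕ} (G : SimpleGraph (Fin n)) :
    {μ : ℝ | Module.End.HasEigenvalue (Matrix.toLin' (G.adjMatrix ℝ)) μ}.Finite :=
  Module.End.finite_hasEigenvalue _

theorem lam_psd {n : ℕ} (G : SimpleGraph (Fin n)) (c : ℝ) (hc : lam1 G ≤ c) :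
    (c • (1 : Matrix (Fin n) (Fin n) ℝ) - G.adjMatrix ℝ).PosSemidef := by
  have hA : (c • (1 : Matrix (Fin n) (Fin n) ℝ) - G.adjMatrix ℝ).IsHermitian := by
    unfold Matrix.IsHermitian
    ext i j
    simp [Matrix.conjTranspose_apply, SimpleGraph.adjMatrix_apply, Matrix.one_apply, G.adj_comm,
      eq_comm]
  rw [hA.posSemidef_iff_eigenvalues_nonneg]
  intro i
  have h1 := hA.mulVec_eigenvectorBasis i
  set ν := hA.eigenvalues i
  set u : Fin n → ℝ := (hA.eigenvectorBasis i).ofLp with hu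
  have hu0 : u ≠ 0 := by
    intro h0
    have := hA.eigenvectorBasis.orthonormal.ne_zero i
    apply this
    ext j
    exact congrFun h0 j
  have h2 : (G.adjMatrix ℝ).mulVec u = (c - ν) • u := by
    rw [Matrix.sub_mulVec, Matrix.smul_mulVec, Matrix.one_mulVec] at h1
    rw [sub_smul]
    have h3 : ν • u = c • u - (G.adjMatrix ℝ).mulVec u := h1.symm
    rw [h3]; abel
  have h3 : Module.End.HasEigenvalue (Matrix.toLin' (G.adjMatrix ℝ)) (c - ν) := by
    apply Module.End.hasEigenvalue_of_hasEigenvector (x := u)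
    rw [Module.End.hasEigenvector_iff, Module.End.mem_eigenspace_iff]
    exact ⟨by simpa using h2, hu0⟩
  have h4 : c - ν ≤ lam1 G := by
    apply le_csSup (eig_bdd G).bddAbove
    exact h3
  show 0 ≤ ν
  linarith

theorem quad_eq {n : ℕ} (G : SimpleGraph (Fin n)) (c : ℝ) (y : Fin n → ℝ) :
    dotProduct (star y) ((c • (1 : Matrix (Fin n) (Fin n) ℝ) - G.adjMatrix ℝ).mulVec y) =
      c * ∑ v, y v ^ 2 - ∑ v, y v * ∑ w ∈ nb G v, y w := by
  rw [Matrix.sub_mulVec, Matrix.smul_mulVec, Matrix.one_mulVec, dotProduct_sub]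
  congr 1
  · simp [dotProduct, Finset.mul_sum]
    exact Finset.sum_congr rfl (fun _ _ => by ring)
  · simp only [dotProduct, adj_mulVec_eq]; simp

theorem rayleigh_le {n : ℕ} (G : SimpleGraph (Fin n)) (y : Fin n → ℝ) :
    ∑ v, y v * ∑ w ∈ nb G v, y w ≤ lam1 G * ∑ v, y v ^ 2 := by
  have h := (lam_psd G _ le_rfl).dotProduct_mulVec_nonneg y
  rw [quad_eq] at h
  linarith

theorem rayleigh_eq {n : ℕ} (G : SimpleGraph (Fin n)) (c : ℝ) (hc : lam1 G ≤ c) (y : Fin n → ℝ)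
    (hy : c * ∑ v, y v ^ 2 ≤ ∑ v, y v * ∑ w ∈ nb G v, y w) (v : Fin n) :
    ∑ w ∈ nb G v, y w = c * y v := by
  have hp := lam_psd G c hc
  have h := hp.dotProduct_mulVec_nonneg y
  have h0 : dotProduct (star y)
      ((c • (1 : Matrix (Fin n) (Fin n) ℝ) - G.adjMatrix ℝ).mulVec y) = 0 := by
    rw [quad_eq] at h ⊢; linarith
  rw [hp.dotProduct_mulVec_zero_iff] at h0
  have h1 := congrFun h0 v
  rw [Matrix.sub_mulVec, Matrix.smul_mulVec, Matrix.one_mulVec] at h1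
  simp only [Pi.sub_apply, Pi.smul_apply, adj_mulVec_eq, smul_eq_mul, Pi.zero_apply] at h1
  linarith

theorem exists_perron {n : ℕ} (hn : 0 < n) (G : SimpleGraph (Fin n)) :
    ∃ x : Fin n → ℝ, (∀ v, 0 ≤ x v) ∧ (∀ v, x v ≤ 1) ∧ (∃ u, x u = 1) ∧
      ∀ v, ∑ w ∈ nb G v, x w = lam1 G * x v := by
  have hne : {μ : ℝ | Module.End.HasEigenvalue (Matrix.toLin' (G.adjMatrix ℝ)) μ}.Nonempty := by
    have hA : (G.adjMatrix ℝ).IsHermitian := by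
      unfold Matrix.IsHermitian
      ext i j
      simp [Matrix.conjTranspose_apply, SimpleGraph.adjMatrix_apply, G.adj_comm]
    have i : Fin n := ⟨0, hn⟩
    refine ⟨hA.eigenvalues i, ?_⟩
    have h1 := hA.mulVec_eigenvectorBasis i
    apply Module.End.hasEigenvalue_of_hasEigenvector (x := (hA.eigenvectorBasis i).ofLp)
    rw [Module.End.hasEigenvector_iff, Module.End.mem_eigenspace_iff]
    refine ⟨by simpa using h1, ?_⟩
    intro h0
    have := hA.eigenvectorBasis.orthonormal.ne_zero i
    apply this
    ext j
    exact congrFun h0 j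
  have hmem : lam1 G ∈ {μ : ℝ | Module.End.HasEigenvalue (Matrix.toLin' (G.adjMatrix ℝ)) μ} :=
    hne.csSup_mem (eig_bdd G)
  obtain ⟨z, hz⟩ := Module.End.HasEigenvalue.exists_hasEigenvector hmem
  rw [Module.End.hasEigenvector_iff, Module.End.mem_eigenspace_iff] at hz
  obtain ⟨hz1, hz0⟩ := hz
  have hz2 : ∀ v, ∑ w ∈ nb G v, z w = lam1 G * z v := by
    intro v
    have := congrFun hz1 v
    rw [Matrix.toLin'_apply, adj_mulVec_eq] at this
    simpa using this
  have hy := rayleigh_eq G (lam1 G) le_rfl (fun v => |z v|) (by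
    have : lam1 G * ∑ v, |z v| ^ 2 = ∑ v, z v * ∑ w ∈ nb G v, z w := by
      rw [Finset.mul_sum]
      refine Finset.sum_congr rfl (fun v _ => ?_)
      rw [hz2, sq_abs]; ring
    rw [this]
    apply Finset.sum_le_sum
    intro v _
    rw [Finset.mul_sum, Finset.mul_sum]
    apply Finset.sum_le_sum
    intro w _
    rw [← abs_mul]; exact le_abs_self _)
  obtain ⟨u, -, hu⟩ := Finset.exists_max_image univ (fun v => |z v|) ⟨⟨0, hn⟩, mem_univ _⟩
  have hpos : 0 < |z u| := by
    rcases (abs_nonneg (z u)).lt_or_eq with h | h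
    · exact h
    · exfalso; apply hz0; ext v
      have := hu v (mem_univ _)
      rw [← h] at this
      exact abs_eq_zero.mp (le_antisymm this (abs_nonneg _))
  refine ⟨fun v => |z v| / |z u|, fun v => by positivity, fun v => ?_, ⟨u, div_self hpos.ne'⟩, ?_⟩
  · rw [div_le_one hpos]; exact hu v (mem_univ _)
  · intro v
    have := hy v
    rw [← Finset.sum_div, this]; ring

end SpecPart

section WheelPart
open scoped Classical
open Finset

theorem wheel_of_list {V : Type*} {k : ℕ} (hk : 2 ≤ k) (G : SimpleGraph V) (h : V) (l : List V)
    (hlen : l.length = 2 * k) (hnd : l.Nodup) (hch : l.IsChain G.Adj)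
    (hcl : ∀ a ∈ l.getLast?, ∀ b ∈ l.head?, G.Adj a b) (hub : ∀ x ∈ l, G.Adj h x) :
    ContainsCopy (wheelGraph (2 * k + 1)) G := by
  have hmnd : (h :: l).Nodup := by
    rw [List.nodup_cons]
    exact ⟨fun hh => G.loopless.irrefl h (hub h hh), hnd⟩
  have hml : (h :: l).length = 2 * k + 1 := by simp [hlen]
  have key : ∀ a b : Fin (2 * k + 1), a.val < b.val →
      (a.val = 0 ∨ a.val + 1 = b.val ∨ (a.val = 1 ∧ b.val = 2 * k)) →
      G.Adj ((h :: l)[a.val]'(by omega)) ((h :: l)[b.val]'(by omega)) := by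
    intro a b hab hc
    obtain ⟨b, hb⟩ := b
    obtain ⟨a, ha⟩ := a
    simp only at hab hc ⊢
    obtain ⟨b, rfl⟩ : ∃ b', b = b' + 1 := ⟨b - 1, by omega⟩
    rw [List.getElem_cons_succ]
    rcases hc with rfl | hc | hc
    · exact hub _ (List.getElem_mem _)
    · rcases Nat.eq_zero_or_pos a with rfl | h0
      · exact hub _ (List.getElem_mem _)
      · obtain ⟨a, rfl⟩ : ∃ a', a = a' + 1 := ⟨a - 1, by omega⟩
        rw [List.getElem_cons_succ]
        have := (List.isChain_iff_getElem.mp hch) a (by omega)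
        have e : b = a + 1 := by omega
        subst e
        exact this
    · obtain ⟨rfl, hb2⟩ := hc
      rw [List.getElem_cons_succ]
      apply SimpleGraph.Adj.symm
      apply hcl
      · have e : b = l.length - 1 := by omega
        subst e
        rw [List.getLast?_eq_getElem?]
        exact List.getElem?_eq_getElem _
      · rw [List.head?_eq_getElem?]
        exact List.getElem?_eq_getElem _
  refine ⟨⟨fun i => (h :: l)[i.val]'(by omega), ?_⟩, ?_⟩
  · intro i j hij
    exact Fin.ext ((hmnd.getElem_inj_iff).mp hij)
  · intro a b hab
    have hne : a.val ≠ b.val := fun e => hab.1 (Fin.ext e)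
    have h2 := hab.2
    rcases lt_or_gt_of_ne hne with hlt | hlt
    · exact key a b hlt (by omega)
    · exact SimpleGraph.Adj.symm (key b a hlt (by omega))

theorem zip_perm {V : Type*} : ∀ (X : List V) (P : List (List V)), X.length = P.length →
    ((X.zip P).flatMap (fun p => p.1 :: p.2)).Perm (X ++ P.flatten)
  | [], [], _ => by simp
  | x :: X, p :: P, h => by
    have ih := zip_perm X P (by simpa using h)
    simp only [List.zip_cons_cons, List.flatMap_cons, List.flatten_cons, List.cons_append]
    refine List.Perm.cons x ?_
    calc p ++ (X.zip P).flatMap (fun p => p.1 :: p.2)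
        |>.Perm (p ++ (X ++ P.flatten)) := List.Perm.append_left p ih
      _ |>.Perm (X ++ (p ++ P.flatten)) := by
          rw [← List.append_assoc, ← List.append_assoc]
          exact List.Perm.append_right _ List.perm_append_comm

theorem chain_flat {V : Type*} (G : SimpleGraph V) (Y : Set V) (Q : Set V)
    (hYQ : ∀ x ∈ Y, ∀ y ∈ Q, G.Adj x y) :
    ∀ (L : List (V × List V)), (∀ p ∈ L, p.1 ∈ Y ∧ p.2.IsChain G.Adj ∧ p.2 ≠ [] ∧ ∀ y ∈ p.2, y ∈ Q) →
    (L.flatMap (fun p => p.1 :: p.2)).IsChain G.Adj ∧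
    (∀ a ∈ (L.flatMap (fun p => p.1 :: p.2)).getLast?, a ∈ Q) ∧
    (∀ a ∈ (L.flatMap (fun p => p.1 :: p.2)).head?, a ∈ Y)
  | [], _ => by simp
  | (x, p) :: L, h => by
    obtain ⟨ih1, ih2, ih3⟩ := chain_flat G Y Q hYQ L (fun q hq => h q (List.mem_cons_of_mem _ hq))
    obtain ⟨hx, hc, hne, hQ⟩ := h (x, p) List.mem_cons_self
    simp only at hx hc hne hQ
    have e : (((x, p) :: L).flatMap (fun p => p.1 :: p.2)) =
      (x :: p) ++ L.flatMap (fun p => p.1 :: p.2) := by simp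
    rw [e]
    have hlast : (x :: p).getLast? = p.getLast? := by
      cases p with
      | nil => exact absurd rfl hne
      | cons a t => rfl
    have hxp : (x :: p).IsChain G.Adj := by
      rw [List.isChain_cons]
      exact ⟨fun y hy => hYQ x hx y (hQ y (List.mem_of_mem_head? hy)), hc⟩
    refine ⟨?_, ?_, ?_⟩
    · apply List.IsChain.append hxp ih1
      intro a ha b hb
      rw [hlast] at ha
      exact SimpleGraph.Adj.symm (hYQ b (ih3 b hb) a (hQ a (List.mem_of_mem_getLast? ha)))
    · intro a ha
      rw [List.getLast?_append] at ha
      cases hL : (L.flatMap (fun p => p.1 :: p.2)).getLast? with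
      | none =>
        rw [hL, hlast] at ha
        exact hQ a (List.mem_of_mem_getLast? (by simpa using ha))
      | some b =>
        rw [hL] at ha
        have : b = a := by simpa using ha
        subst this
        exact ih2 b hL
    · intro a ha
      have : x = a := by simpa using ha
      exact this ▸ hx

theorem wheel_of_XP {V : Type*} {k : ℕ} (hk : 2 ≤ k) (G : SimpleGraph V) (w : V)
    (X : List V) (P : List (List V)) (hl : X.length = P.length)
    (htot : X.length + P.flatten.length = 2 * k) (hX : X.Nodup) (hP : P.flatten.Nodup)
    (hpc : ∀ p ∈ P, p.IsChain G.Adj ∧ p ≠ [])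
    (hXP : ∀ x ∈ X, ∀ y ∈ P.flatten, G.Adj x y)
    (hwX : ∀ x ∈ X, G.Adj w x) (hwP : ∀ y ∈ P.flatten, G.Adj w y) :
    ContainsCopy (wheelGraph (2 * k + 1)) G := by
  have hperm := zip_perm X P hl
  obtain ⟨h1, h2, h3⟩ := chain_flat G {x | x ∈ X} {y | y ∈ P.flatten} hXP (X.zip P) (by
    rintro ⟨x, p⟩ hp
    obtain ⟨ha, hb⟩ := List.of_mem_zip hp
    exact ⟨ha, (hpc p hb).1, (hpc p hb).2, fun y hy => List.mem_flatten.mpr ⟨p, hb, hy⟩⟩)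
  apply wheel_of_list hk G w ((X.zip P).flatMap (fun p => p.1 :: p.2))
  · rw [hperm.length_eq, List.length_append, htot]
  · rw [hperm.nodup_iff, List.nodup_append]
    refine ⟨hX, hP, ?_⟩
    intro a ha b hb hab
    subst hab
    exact G.loopless.irrefl a (hXP a ha a hb)
  · exact h1
  · intro a ha b hb
    exact SimpleGraph.Adj.symm (hXP b (h3 b hb) a (h2 a ha))
  · intro x hx
    rw [hperm.mem_iff, List.mem_append] at hx
    rcases hx with hx | hx
    · exact hwX x hx
    · exact hwP x hx

/-- `K_{1,k,k}` contains the wheel. -/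
theorem wheel_of_K1kk {V : Type*} {k : ℕ} (hk : 2 ≤ k) (G : SimpleGraph V) (w : V)
    (X Y : Finset V) (hX : X.card = k) (hY : Y.card = k) (hXY : ∀ x ∈ X, ∀ y ∈ Y, G.Adj x y)
    (hwX : ∀ x ∈ X, G.Adj w x) (hwY : ∀ x ∈ Y, G.Adj w x) :
    ContainsCopy (wheelGraph (2 * k + 1)) G := by
  have e : (Y.toList.map (fun y => [y])).flatten = Y.toList := by
    induction Y.toList with
    | nil => rfl
    | cons a t ih => simpa using ih
  refine wheel_of_XP hk G w X.toList (Y.toList.map (fun y => [y])) ?_ ?_ X.nodup_toList ?_ ?_ ?_ ?_ ?_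
  · simp [hX, hY]
  · rw [e]; simp [hX, hY]; omega
  · rw [e]; exact Y.nodup_toList
  · intro p hp
    obtain ⟨y, -, rfl⟩ := List.mem_map.mp hp
    exact ⟨List.isChain_singleton _, by simp⟩
  · rw [e]; simpa using hXY
  · simpa using hwX
  · rw [e]; simpa using hwY

/-- extraction of hub and rim from a copy of the wheel -/
theorem rim_of_wheel {V : Type*} {k : ℕ} (hk : 2 ≤ k) (G : SimpleGraph V)
    (h : ContainsCopy (wheelGraph (2 * k + 1)) G) :
    ∃ (w : V) (f : ℕ → V), (∀ i j, i < 2 * k → j < 2 * k → f i = f j → i = j) ∧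
      (∀ i, f (i + 2 * k) = f i) ∧ (∀ i, G.Adj (f i) (f (i + 1))) ∧ (∀ i, G.Adj w (f i)) := by
  obtain ⟨e, he⟩ := h
  refine ⟨e ⟨0, by omega⟩, fun i => e ⟨i % (2 * k) + 1, by
    have := Nat.mod_lt i (show 0 < 2 * k by omega); omega⟩, ?_, ?_, ?_, ?_⟩
  · intro i j hi hj hij
    have := e.injective hij
    rw [Fin.mk.injEq, Nat.mod_eq_of_lt hi, Nat.mod_eq_of_lt hj] at this
    omega
  · intro i; simp
  · intro i
    apply he
    have h1 := Nat.mod_lt i (show 0 < 2 * k by omega)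
    have h2 := Nat.mod_lt (i + 1) (show 0 < 2 * k by omega)
    have h3 : (i + 1) % (2 * k) = i % (2 * k) + 1 ∨
        (i % (2 * k) = 2 * k - 1 ∧ (i + 1) % (2 * k) = 0) := by
      rw [Nat.add_mod, Nat.mod_eq_of_lt (show 1 < 2 * k by omega)]
      rcases Nat.lt_or_ge (i % (2 * k) + 1) (2 * k) with h | h
      · left; exact Nat.mod_eq_of_lt h
      · right
        have : i % (2 * k) + 1 = 2 * k := by omega
        rw [this]; simp; omega
    refine ⟨?_, ?_⟩
    · intro hh
      rw [Fin.mk.injEq] at hh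
      omega
    · simp only
      omega
  · intro i
    apply he
    refine ⟨?_, Or.inl rfl⟩
    intro hh
    rw [Fin.mk.injEq] at hh
    omega

/-- the graph obtained by making `Q` the neighbourhood of `v` -/
noncomputable def swapG {n : ℕ} (G : SimpleGraph (Fin n)) (v : Fin n) (Q : Finset (Fin n)) :
    SimpleGraph (Fin n) where
  Adj a b := a ≠ b ∧ ((a = v ∧ b ∈ Q) ∨ (b = v ∧ a ∈ Q) ∨ (a ≠ v ∧ b ≠ v ∧ G.Adj a b))
  symm := ⟨by
    rintro a b ⟨h, h'⟩
    refine ⟨h.symm, ?_⟩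
    rcases h' with h' | h' | h'
    · exact Or.inr (Or.inl h')
    · exact Or.inl h'
    · exact Or.inr (Or.inr ⟨h'.2.1, h'.1, h'.2.2.symm⟩)⟩
  loopless := ⟨fun a h => h.1 rfl⟩

theorem swap_free {n : ℕ} (t : ℕ) (G : SimpleGraph (Fin n)) (v : Fin n) (Q : Finset (Fin n))
    (hG : WheelFree t G)
    (hQ : ∀ Q' ⊆ Q, ∀ Z : Finset (Fin n), Q'.card ≤ t → Z.card ≤ t →
      ∃ s, s ∉ Z ∧ ∀ q ∈ Q', G.Adj s q) :
    WheelFree t (swapG G v Q) := by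
  rintro ⟨e, he⟩
  apply hG
  by_cases hv : ∃ i, e i = v
  · obtain ⟨i, hi⟩ := hv
    obtain ⟨s, hs, hsQ⟩ := hQ (Q.filter (fun q => ∃ j, e j = q ∧ (wheelGraph t).Adj i j))
      (Finset.filter_subset _ _) (univ.image e) (by
        calc _ ≤ (univ.image e).card := by
                apply Finset.card_le_card
                intro q hq
                simp only [Finset.mem_filter] at hq
                obtain ⟨j, hj, -⟩ := hq.2
                simp only [Finset.mem_image]; exact ⟨j, mem_univ _, hj⟩
          _ ≤ t := by
                refine card_image_le.trans ?_
                simp) (by refine card_image_le.trans ?_; simp)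
    have hs' : ∀ j, e j ≠ s := by
      intro j hj
      exact hs (by simp only [Finset.mem_image]; exact ⟨j, mem_univ _, hj⟩)
    have hadj : ∀ j, (wheelGraph t).Adj i j → G.Adj s (e j) := by
      intro j hj
      apply hsQ
      have h1 := he i j hj
      rw [hi] at h1
      have hne : e j ≠ v := h1.1.symm
      rw [Finset.mem_filter]
      refine ⟨?_, j, rfl, hj⟩
      rcases h1.2 with h2 | h2 | h2
      · exact h2.2
      · exact absurd h2.1 hne
      · exact absurd rfl h2.1
    refine ⟨⟨fun j => if j = i then s else e j, ?_⟩, ?_⟩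
    · intro a b hab
      simp only at hab
      split_ifs at hab with h1 h2 h2
      · rw [h1, h2]
      · exact absurd hab.symm (hs' b)
      · exact absurd hab (hs' a)
      · exact e.injective hab
    · intro a b hab
      show G.Adj (if a = i then s else e a) (if b = i then s else e b)
      split_ifs with h1 h2 h2
      · subst h1; subst h2; exact absurd rfl hab.ne
      · subst h1; exact hadj b hab
      · subst h2; exact (hadj a hab.symm).symm
      · have h3 := he a b hab
        have ha : e a ≠ v := fun h => h1 (e.injective (h.trans hi.symm))
        have hb : e b ≠ v := fun h => h2 (e.injective (h.trans hi.symm))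
        rcases h3.2 with h4 | h4 | h4
        · exact absurd h4.1 ha
        · exact absurd h4.1 hb
        · exact h4.2.2
  · push Not at hv
    refine ⟨e, fun a b hab => ?_⟩
    rcases (he a b hab).2 with h4 | h4 | h4
    · exact absurd h4.1 (hv a)
    · exact absurd h4.1 (hv b)
    · exact h4.2.2

/-- Extremality and swapping: the eigenvector inequality. -/
theorem swap_ineq {n : ℕ} (t : ℕ) (G : SimpleGraph (Fin n)) (hG : IsSpexWheel t G)
    (x : Fin n → ℝ) (hx0 : ∀ v, 0 ≤ x v) (hx : ∀ v, ∑ w ∈ nb G v, x w = lam1 G * x v)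
    (v : Fin n) (Q : Finset (Fin n)) (hvQ : v ∉ Q) (hfree : WheelFree t (swapG G v Q)) :
    ∑ w ∈ Q, x w ≤ lam1 G * x v := by
  by_contra hcon
  push Not at hcon
  have hle := hG.2 _ hfree
  have hnbv : nb (swapG G v Q) v = Q := by
    ext w
    rw [mem_nb]
    constructor
    · rintro ⟨h1, h2 | h2 | h2⟩
      · exact h2.2
      · exact absurd h2.1.symm h1
      · exact absurd rfl h2.1
    · intro hw
      exact ⟨fun h => hvQ (h ▸ hw), Or.inl ⟨rfl, hw⟩⟩
  have hsum : ∑ a, x a * ∑ w ∈ nb (swapG G v Q) a, x w - ∑ a, x a * ∑ w ∈ nb G a, x w =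
      2 * x v * (∑ w ∈ Q, x w - ∑ w ∈ nb G v, x w) := by
    have e1 : ∀ a, a ≠ v → ∑ w ∈ nb (swapG G v Q) a, x w - ∑ w ∈ nb G a, x w =
        (if a ∈ Q then x v else 0) - (if a ∈ nb G v then x v else 0) := by
      intro a ha
      have f1 : nb (swapG G v Q) a = (nb G a).erase v ∪ (if a ∈ Q then {v} else ∅) := by
        ext w
        rw [mem_nb, Finset.mem_union, Finset.mem_erase, mem_nb]
        by_cases hw : w = v
        · subst hw
          by_cases hq : a ∈ Q <;> simp [swapG, hq, ha]
        · have : w ∉ (if a ∈ Q then ({v} : Finset (Fin n)) else ∅) := by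
            split_ifs <;> simp [hw]
          simp only [this, or_false]
          simp only [swapG, ha, hw, false_and, false_or, ne_eq, not_false_eq_true, true_and]
          exact ⟨fun h => h.2, fun h => ⟨h.ne, h⟩⟩
      rw [f1, Finset.sum_union]
      · have f2 : ∑ w ∈ nb G a, x w = ∑ w ∈ (nb G a).erase v, x w +
            (if a ∈ nb G v then x v else 0) := by
          split_ifs with h
          · rw [Finset.sum_erase_add]
            rw [mem_nb] at h ⊢; exact h.symm
          · rw [Finset.erase_eq_of_notMem, add_zero]
            rw [mem_nb] at h ⊢; exact fun h' => h h'.symm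
        rw [f2]
        split_ifs <;> simp
      · split_ifs <;> simp
    rw [← Finset.sum_sub_distrib]
    simp only [← mul_sub]
    rw [← Finset.add_sum_erase _ _ (mem_univ v), hnbv]
    have e2 : ∑ a ∈ univ.erase v, x a * (∑ w ∈ nb (swapG G v Q) a, x w - ∑ w ∈ nb G a, x w) =
        ∑ a ∈ univ.erase v, x a * ((if a ∈ Q then x v else 0) - (if a ∈ nb G v then x v else 0)) := by
      apply Finset.sum_congr rfl
      intro a ha
      rw [e1 a (Finset.ne_of_mem_erase ha)]
    rw [e2, Finset.sum_erase]
    · simp only [mul_sub, mul_ite, mul_zero, Finset.sum_sub_distrib, Finset.sum_ite_mem,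
        Finset.univ_inter]
      rw [← Finset.sum_mul, ← Finset.sum_mul]
      ring
    · have : v ∉ nb G v := by rw [mem_nb]; exact G.loopless.irrefl v
      simp [hvQ, this]
  have hA : ∑ a, x a * ∑ w ∈ nb G a, x w = lam1 G * ∑ a, x a ^ 2 := by
    rw [Finset.mul_sum]
    exact Finset.sum_congr rfl (fun a _ => by rw [hx]; ring)
  have := rayleigh_eq (swapG G v Q) (lam1 G) hle x (by
    rw [← hA, ← sub_nonneg, hsum, hx]
    have := hx0 v
    apply mul_nonneg (by linarith) (by linarith)) v
  rw [hnbv] at this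
  linarith

end WheelPart

section KSTPart
open scoped Classical
open Finset

theorem sum_filter_comm {V : Type*} (G : SimpleGraph V) (A B : Finset V) :
    ∑ v ∈ A, (B.filter (fun w => G.Adj v w)).card = ∑ w ∈ B, (A.filter (fun v => G.Adj w v)).card := by
  have := Finset.sum_card_bipartiteAbove_eq_sum_card_bipartiteBelow (s := A) (t := B) G.Adj
  simp only [Finset.bipartiteAbove, Finset.bipartiteBelow] at this
  rw [this]
  refine Finset.sum_congr rfl (fun w _ => ?_)
  congr 1
  ext v; simp [G.adj_comm]

theorem kst (k : ℕ) (hk : 1 ≤ k) (ε : ℝ) (hε : 0 < ε) : ∃ N : ℕ, ∀ n, N ≤ n → ∀ (G : SimpleGraph (Fin n))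
    (A : Finset (Fin n)),
    ε * (n : ℝ) ^ 2 ≤ ∑ v ∈ A, ((A.filter (fun w => G.Adj v w)).card : ℝ) →
    ∃ X Y : Finset (Fin n), X ⊆ A ∧ Y ⊆ A ∧ X.card = k ∧ Y.card = k ∧
      ∀ x ∈ X, ∀ y ∈ Y, G.Adj x y := by
  obtain ⟨m, hm⟩ := exists_nat_ge (4 * k / ε)
  obtain ⟨N, hN⟩ := exists_nat_ge ((2 * m + 4 * (k * 2 ^ m + 1)) / ε + 1)
  refine ⟨N, fun n hn G A hA => ?_⟩
  have hn' : (2 * m + 4 * (k * 2 ^ m + 1)) / ε + 1 ≤ (n : ℝ) := hN.trans (by exact_mod_cast hn)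
  have hn1 : (1 : ℝ) ≤ n := by
    have : 0 ≤ (2 * m + 4 * (k * 2 ^ m + 1)) / ε := by positivity
    linarith
  have hn2 : 2 * m + 4 * (k * 2 ^ m + 1) ≤ ε * (n : ℝ) := by
    have : (2 * m + 4 * (k * 2 ^ m + 1)) / ε ≤ (n : ℝ) := by linarith
    rw [div_le_iff₀ hε] at this
    linarith
  have hkm : 4 * k ≤ ε * m := by rw [div_le_iff₀ hε] at hm; linarith
  have hcA : ∀ B : Finset (Fin n), (B.card : ℝ) ≤ n := by
    intro B; exact_mod_cast (card_le_univ B).trans (by simp)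
  set d : Fin n → ℝ := fun v => ((A.filter (fun w => G.Adj v w)).card : ℝ) with hd
  set H := A.filter (fun v => ε * n / 2 ≤ d v) with hH
  have hHc : ε * n / 2 ≤ H.card := by
    have h1 : ∑ v ∈ A, d v ≤ H.card * n + n * (ε * n / 2) := by
      rw [← Finset.sum_filter_add_sum_filter_not A (fun v => ε * n / 2 ≤ d v)]
      apply add_le_add
      · rw [← nsmul_eq_mul]
        exact Finset.sum_le_card_nsmul _ _ _ (fun v _ => hcA _)
      · calc _ ≤ ((A.filter (fun v => ¬ ε * n / 2 ≤ d v)).card : ℝ) * (ε * n / 2) := by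
              rw [← nsmul_eq_mul]
              refine Finset.sum_le_card_nsmul _ _ _ (fun v hv => ?_)
              simp only [Finset.mem_filter, not_le] at hv
              exact hv.2.le
          _ ≤ _ := by
              apply mul_le_mul_of_nonneg_right (hcA _) (by positivity)
    nlinarith
  obtain ⟨M, hMH, hMc⟩ := Finset.exists_subset_card_eq (s := H) (n := m) (by
    have : (m : ℝ) ≤ H.card := by
      have : (0 : ℝ) ≤ k * 2 ^ m := by positivity
      linarith
    exact_mod_cast this)
  set W := A.filter (fun w => k ≤ (M.filter (fun v => G.Adj w v)).card) with hW
  have hWc : ε * n / 4 * m ≤ W.card * m := by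
    have h1 : m * (ε * n / 2) ≤ ∑ w ∈ A, ((M.filter (fun v => G.Adj w v)).card : ℝ) := by
      have := sum_filter_comm G M A
      have h2 : ∑ v ∈ M, d v = ∑ w ∈ A, ((M.filter (fun v => G.Adj w v)).card : ℝ) := by
        simp only [hd]; exact_mod_cast this
      rw [← h2, ← hMc, ← nsmul_eq_mul]
      apply Finset.card_nsmul_le_sum
      intro v hv
      exact (Finset.mem_filter.mp (hMH hv)).2
    have h2 : ∑ w ∈ A, ((M.filter (fun v => G.Adj w v)).card : ℝ) ≤ W.card * m + n * k := by
      rw [← Finset.sum_filter_add_sum_filter_not A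
        (fun w => k ≤ (M.filter (fun v => G.Adj w v)).card)]
      apply add_le_add
      · rw [← nsmul_eq_mul]
        refine Finset.sum_le_card_nsmul _ _ _ (fun v _ => ?_)
        rw [← hMc]
        exact_mod_cast card_le_card (filter_subset _ _)
      · calc _ ≤ ((A.filter (fun w => ¬ k ≤ (M.filter (fun v => G.Adj w v)).card)).card : ℝ) * k := by
              rw [← nsmul_eq_mul]
              refine Finset.sum_le_card_nsmul _ _ _ (fun v hv => ?_)
              simp only [Finset.mem_filter, not_le] at hv
              exact_mod_cast hv.2.le
          _ ≤ _ := by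
              apply mul_le_mul_of_nonneg_right (hcA _) (by positivity)
    nlinarith
  have hm0 : (0 : ℝ) < m := by
    have : (1 : ℝ) ≤ k := by exact_mod_cast hk
    by_contra h
    nlinarith
  have hWc2 : ε * n / 4 ≤ W.card := le_of_mul_le_mul_right hWc hm0
  have hch : ∀ w ∈ W, ∃ T ∈ M.powersetCard k, ∀ v ∈ T, G.Adj w v := by
    intro w hw
    obtain ⟨T, hT, hTc⟩ := Finset.exists_subset_card_eq (Finset.mem_filter.mp hw).2
    refine ⟨T, ?_, fun v hv => (Finset.mem_filter.mp (hT hv)).2⟩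
    rw [Finset.mem_powersetCard]
    exact ⟨hT.trans (filter_subset _ _), hTc⟩
  choose! φ hφ1 hφ2 using hch
  obtain ⟨T, hT, hTc⟩ := Finset.exists_lt_card_fiber_of_mul_lt_card_of_maps_to (s := W)
    (t := M.powersetCard k) (f := φ) (n := k) hφ1 (by
      have h1 : (M.powersetCard k).card ≤ 2 ^ m := by
        rw [Finset.card_powersetCard, hMc]; exact Nat.choose_le_two_pow _ _
      have h2 : k * 2 ^ m < W.card := by
        have : ((k * 2 ^ m : ℕ) : ℝ) < W.card := by push_cast; linarith
        exact_mod_cast this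
      calc _ ≤ 2 ^ m * k := Nat.mul_le_mul_right _ h1
        _ < _ := by linarith)
  obtain ⟨Y, hY, hYc⟩ := Finset.exists_subset_card_eq hTc.le
  rw [Finset.mem_powersetCard] at hT
  refine ⟨T, Y, ?_, ?_, hT.2, hYc, ?_⟩
  · exact (hT.1.trans hMH).trans (filter_subset _ _)
  · exact (hY.trans (filter_subset _ _)).trans (filter_subset _ _)
  · intro t ht y hy
    have := Finset.mem_filter.mp (hY hy)
    exact (hφ2 y this.1 t (this.2 ▸ ht)).symm

end KSTPart

section ConstrPart
open scoped Classical
open Finset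

theorem free_of_struct {V ι : Type*} [Fintype V] {k : ℕ} (hk : 3 ≤ k) (G : SimpleGraph V)
    (L : V → Prop) (c : V → ι)
    (h1 : ∀ v, L v → (univ.filter (fun w => G.Adj v w ∧ L w)).card ≤ k - 1)
    (h2 : ∀ v w, L v → L w → G.Adj v w → c v = c w)
    (h3 : ∀ i, (univ.filter (fun v => L v ∧ c v = i)).card ≤ 2 * k - 2)
    (p q : V)
    (h4 : ∀ v w, ¬ L v → ¬ L w → G.Adj v w → (v = p ∧ w = q) ∨ (v = q ∧ w = p)) :
    ¬ ContainsCopy (wheelGraph (2 * k + 1)) G := by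
  intro hW
  obtain ⟨w, f, hinj, hper, hadj, hub⟩ := rim_of_wheel (by omega) G hW
  have hmod : ∀ a, f a = f (a % (2 * k)) := by
    intro a
    have : ∀ t s, f (s + 2 * k * t) = f s := by
      intro t
      induction t with
      | zero => intro s; simp
      | succ t ih => intro s; rw [Nat.mul_succ, ← Nat.add_assoc, hper, ih]
    conv_lhs => rw [← Nat.mod_add_div a (2 * k)]
    exact this _ _
  have hk0 : 0 < 2 * k := by omega
  have hinj' : ∀ a b, f a = f b → a % (2 * k) = b % (2 * k) := by
    intro a b hab
    rw [hmod a, hmod b] at hab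
    exact hinj _ _ (Nat.mod_lt _ hk0) (Nat.mod_lt _ hk0) hab
  by_cases hw : L w
  · set I := range (2 * k)
    have hIL : (I.filter (fun i => L (f i))).card ≤ k - 1 := by
      refine le_trans ?_ (h1 w hw)
      apply Finset.card_le_card_of_injOn f
      · intro i hi
        simp only [coe_filter, Set.mem_ofPred_eq, mem_univ, true_and] at hi ⊢
        exact ⟨hub i, hi.2⟩
      · intro i hi j hj hij
        simp only [coe_filter, Set.mem_ofPred_eq, I, mem_range] at hi hj
        exact hinj i j hi.1 hj.1 hij
    have hsplit := Finset.card_filter_add_card_filter_not (s := I) (fun i => L (f i))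
    have hI : I.card = 2 * k := card_range _
    have hsplit2 := Finset.card_filter_add_card_filter_not
      (s := I.filter (fun i => ¬ L (f i))) (fun i => L (f (i + 1)))
    have hle : ((I.filter (fun i => ¬ L (f i))).filter (fun i => L (f (i + 1)))).card ≤
        (I.filter (fun i => L (f i))).card := by
      apply Finset.card_le_card_of_injOn (fun i => (i + 1) % (2 * k))
      · intro i hi
        simp only [coe_filter, Set.mem_ofPred_eq, mem_filter, I, mem_range] at hi ⊢
        exact ⟨Nat.mod_lt _ hk0, by rw [← hmod]; exact hi.2⟩
      · intro i hi j hj hij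
        simp only [coe_filter, Set.mem_ofPred_eq, mem_filter, I, mem_range] at hi hj hij
        have := Nat.ModEq.add_right_cancel' 1 (show i + 1 ≡ j + 1 [MOD 2 * k] from hij)
        exact Nat.ModEq.eq_of_lt_of_lt this hi.1.1 hj.1.1
    have h2c : 1 < ((I.filter (fun i => ¬ L (f i))).filter (fun i => ¬ L (f (i + 1)))).card := by
      omega
    obtain ⟨i, hi, j, hj, hij⟩ := Finset.one_lt_card.mp h2c
    simp only [mem_filter, I, mem_range] at hi hj
    have a1 := h4 _ _ hi.1.2 hi.2 (hadj i)
    have a2 := h4 _ _ hj.1.2 hj.2 (hadj j)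
    have key : ∀ i j, i < 2 * k → j < 2 * k → f (i + 1) = f j → f (j + 1) = f i → False := by
      intro i j hi hj e1 e2
      have e3 := hinj' _ _ e1
      have e4 := hinj' _ _ e2
      rw [Nat.mod_eq_of_lt hj] at e3
      rw [Nat.mod_eq_of_lt hi] at e4
      rcases Nat.lt_or_ge (i + 1) (2 * k) with h | h <;>
        rcases Nat.lt_or_ge (j + 1) (2 * k) with h' | h'
      · rw [Nat.mod_eq_of_lt h] at e3; rw [Nat.mod_eq_of_lt h'] at e4; omega
      · have : j + 1 = 2 * k := by omega
        rw [this, Nat.mod_self] at e4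
        rw [Nat.mod_eq_of_lt h] at e3; omega
      · have : i + 1 = 2 * k := by omega
        rw [this, Nat.mod_self] at e3
        rw [Nat.mod_eq_of_lt h'] at e4; omega
      · have : i + 1 = 2 * k := by omega
        rw [this, Nat.mod_self] at e3; omega
    rcases a1 with a1 | a1 <;> rcases a2 with a2 | a2
    · exact hij (hinj _ _ hi.1.1 hj.1.1 (a1.1.trans a2.1.symm))
    · exact key i j hi.1.1 hj.1.1 (a1.2.trans a2.1.symm) (a2.2.trans a1.1.symm)
    · exact key i j hi.1.1 hj.1.1 (a1.2.trans a2.1.symm) (a2.2.trans a1.1.symm)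
    · exact hij (hinj _ _ hi.1.1 hj.1.1 (a1.1.trans a2.1.symm))
  · have hone : ∀ i j, ¬ L (f i) → ¬ L (f j) → f i = f j := by
      intro i j hi hj
      rcases h4 _ _ hw hi (hub i) with a | a <;> rcases h4 _ _ hw hj (hub j) with b | b
      · exact a.2.trans b.2.symm
      · exact absurd (b.1.trans a.2.symm) (hub i).ne
      · exact absurd (a.1.trans b.2.symm) (hub j).ne
      · exact a.2.trans b.2.symm
    have hex : ∃ i0, ∀ j, j < 2 * k - 1 → L (f (i0 + j)) := by
      by_cases hall : ∀ i, L (f i)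
      · exact ⟨0, fun j _ => hall _⟩
      · push Not at hall
        obtain ⟨i0, hi0⟩ := hall
        refine ⟨i0 + 1, fun j hj => ?_⟩
        by_contra hL
        have e := hinj' _ _ (hone _ _ hL hi0)
        have e2 : (i0 + (j + 1)) ≡ i0 + 0 [MOD 2 * k] := by
          rw [show i0 + (j + 1) = i0 + 1 + j by ring]; exact e
        have e3 := Nat.ModEq.add_left_cancel' i0 e2
        have := Nat.ModEq.eq_of_lt_of_lt e3 (by omega) (by omega)
        omega
    obtain ⟨i0, hi0⟩ := hex
    have hc : ∀ j, j < 2 * k - 1 → c (f (i0 + j)) = c (f i0) := by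
      intro j
      induction j with
      | zero => intro _; rfl
      | succ j ih =>
        intro hj
        rw [← ih (by omega)]
        exact (h2 _ _ (hi0 j (by omega)) (hi0 (j + 1) hj) (hadj (i0 + j))).symm
    have : (range (2 * k - 1)).card ≤ 2 * k - 2 := by
      refine le_trans ?_ (h3 (c (f i0)))
      apply Finset.card_le_card_of_injOn (fun j => f (i0 + j))
      · intro j hj
        simp only [coe_range, Set.mem_Iio] at hj
        simp only [coe_filter, Set.mem_ofPred_eq, mem_univ, true_and]
        exact ⟨hi0 j hj, hc j hj⟩
      · intro i hi j hj hij
        simp only [coe_range, Set.mem_Iio] at hi hj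
        have e3 := Nat.ModEq.add_left_cancel' i0 (show i0 + i ≡ i0 + j [MOD 2 * k] from hinj' _ _ hij)
        exact Nat.ModEq.eq_of_lt_of_lt e3 (by omega) (by omega)
    rw [card_range] at this
    omega

/-- vertices of the left part of the model graph -/
abbrev TL (k p q : ℕ) := (Fin p × Fin k) ⊕ (Fin q × (Fin (k - 1) × Bool))

/-- adjacency in the left part of the model graph -/
def ownL (k p q : ℕ) : TL k p q → TL k p q → Prop
  | Sum.inl x, Sum.inl y => x.1 = y.1 ∧ x.2 ≠ y.2
  | Sum.inr x, Sum.inr y => x.1 = y.1 ∧ x.2.2 ≠ y.2.2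
  | _, _ => False

/-- adjacency in the model graph -/
def adj0 (k p q b : ℕ) : TL k p q ⊕ Fin b → TL k p q ⊕ Fin b → Prop
  | Sum.inl x, Sum.inl y => ownL k p q x y
  | Sum.inr i, Sum.inr j => (i.val = 0 ∧ j.val = 1) ∨ (i.val = 1 ∧ j.val = 0)
  | _, _ => True

/-- the model graph -/
def G0 (k p q b : ℕ) : SimpleGraph (TL k p q ⊕ Fin b) where
  Adj := adj0 k p q b
  symm := ⟨by
    rintro ((x | x) | i) ((y | y) | j) h <;> simp only [adj0, ownL] at h ⊢
    · exact ⟨h.1.symm, h.2.symm⟩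
    · exact ⟨h.1.symm, h.2.symm⟩
    · tauto⟩
  loopless := ⟨by
    rintro ((x | x) | i) h <;> simp only [adj0, ownL] at h
    · exact h.2 rfl
    · exact h.2 rfl
    · omega⟩

theorem ownL_ll (k p q : ℕ) (x y : Fin p × Fin k) :
    ownL k p q (Sum.inl x) (Sum.inl y) ↔ x.1 = y.1 ∧ x.2 ≠ y.2 := ⟨fun h => h, fun h => h⟩
theorem ownL_rr (k p q : ℕ) (x y : Fin q × (Fin (k - 1) × Bool)) :
    ownL k p q (Sum.inr x) (Sum.inr y) ↔ x.1 = y.1 ∧ x.2.2 ≠ y.2.2 := ⟨fun h => h, fun h => h⟩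
theorem ownL_lr (k p q : ℕ) (x : Fin p × Fin k) (y : Fin q × (Fin (k - 1) × Bool)) :
    ownL k p q (Sum.inl x) (Sum.inr y) ↔ False := ⟨fun h => h, fun h => h⟩
theorem ownL_rl (k p q : ℕ) (y : Fin p × Fin k) (x : Fin q × (Fin (k - 1) × Bool)) :
    ownL k p q (Sum.inr x) (Sum.inl y) ↔ False := ⟨fun h => h, fun h => h⟩
theorem G0_ll (k p q b : ℕ) (x y : TL k p q) :
    (G0 k p q b).Adj (Sum.inl x) (Sum.inl y) ↔ ownL k p q x y := ⟨fun h => h, fun h => h⟩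
theorem G0_lr (k p q b : ℕ) (x : TL k p q) (y : Fin b) :
    (G0 k p q b).Adj (Sum.inl x) (Sum.inr y) ↔ True := ⟨fun _ => trivial, fun h => h⟩
theorem G0_rl (k p q b : ℕ) (x : TL k p q) (y : Fin b) :
    (G0 k p q b).Adj (Sum.inr y) (Sum.inl x) ↔ True := ⟨fun _ => trivial, fun h => h⟩
theorem G0_rr (k p q b : ℕ) (i j : Fin b) :
    (G0 k p q b).Adj (Sum.inr i) (Sum.inr j) ↔
      (i.val = 0 ∧ j.val = 1) ∨ (i.val = 1 ∧ j.val = 0) := ⟨fun h => h, fun h => h⟩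

theorem ownL_deg (k p q : ℕ) (hk : 3 ≤ k) (x : TL k p q) :
    (univ.filter (fun y => ownL k p q x y)).card = k - 1 := by
  rw [Finset.card_filter, Fintype.sum_sum_type]
  rcases x with ⟨i, a⟩ | ⟨i, a, s⟩
  · simp only [ownL_ll, ownL_lr, ownL_rl, ownL_rr, if_false, Finset.sum_const_zero, add_zero]
    rw [Fintype.sum_prod_type, Finset.sum_eq_single i]
    · simp only [true_and]
      rw [← Finset.card_filter, Finset.filter_ne, Finset.card_erase_of_mem (mem_univ _)]
      simp
    · intro j _ hj
      simp [hj.symm]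
    · simp
  · simp only [ownL_ll, ownL_lr, ownL_rl, ownL_rr, if_false, Finset.sum_const_zero, zero_add]
    rw [Fintype.sum_prod_type, Finset.sum_eq_single i]
    · simp only [true_and]
      rw [Fintype.sum_prod_type]
      cases s <;> simp
    · intro j _ hj
      simp [hj.symm]
    · simp

theorem G0_free (k p q b : ℕ) (hk : 3 ≤ k) (hb : 2 ≤ b) :
    ¬ ContainsCopy (wheelGraph (2 * k + 1)) (G0 k p q b) := by
  let c : TL k p q ⊕ Fin b → (Fin p ⊕ Fin q) ⊕ Unit := fun v =>
    match v with
    | Sum.inl (Sum.inl x) => Sum.inl (Sum.inl x.1)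
    | Sum.inl (Sum.inr x) => Sum.inl (Sum.inr x.1)
    | Sum.inr _ => Sum.inr ()
  refine free_of_struct hk (G0 k p q b) (fun v => v.isLeft = true) c ?_ ?_ ?_
    (Sum.inr ⟨0, by omega⟩) (Sum.inr ⟨1, by omega⟩) ?_
  · rintro (x | i) h
    · rw [Finset.card_filter, Fintype.sum_sum_type]
      simp only [Sum.isLeft_inl, Sum.isLeft_inr, and_true]
      simp only [Bool.false_eq_true, and_false, if_false, Finset.sum_const_zero, add_zero]
      simp only [G0_ll]
      rw [← Finset.card_filter]
      exact (ownL_deg k p q hk x).le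
    · simp at h
  · rintro ((x | x) | i) ((y | y) | j) hv hw h <;>
      simp only [G0_ll, G0_lr, G0_rl, G0_rr, ownL_ll, ownL_lr, ownL_rl, ownL_rr, Sum.isLeft_inr, Bool.false_eq_true] at h hv hw
    · simp only [c]; rw [h.1]
    · simp only [c]; rw [h.1]
  · intro i
    rw [Finset.card_filter, Fintype.sum_sum_type, Fintype.sum_sum_type]
    simp only [Sum.isLeft_inl, Sum.isLeft_inr, true_and, Bool.false_eq_true, false_and, if_false,
      Finset.sum_const_zero, add_zero, c]
    rcases i with (i | i) | i
    · simp only [Sum.inl.injEq, reduceCtorEq, if_false, Finset.sum_const_zero, add_zero]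
      rw [Fintype.sum_prod_type, Finset.sum_eq_single i]
      · simp; omega
      · intro j _ hj; simp [hj]
      · simp
    · simp only [Sum.inl.injEq, Sum.inr.injEq, reduceCtorEq, if_false, Finset.sum_const_zero, zero_add]
      rw [Fintype.sum_prod_type, Finset.sum_eq_single i]
      · simp; omega
      · intro j _ hj; simp [hj]
      · simp
    · simp
  · rintro ((x | x) | i) ((y | y) | j) hv hw h <;>
      simp only [G0_ll, G0_lr, G0_rl, G0_rr, ownL_ll, ownL_lr, ownL_rl, ownL_rr, Sum.isLeft_inl, not_true] at h hv hw
    simp only [Sum.inr.injEq, Fin.ext_iff]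
    exact h

theorem G0_quad (k p q b : ℕ) (hk : 3 ≤ k) (hb : 2 ≤ b) (β : ℝ)
    (z : TL k p q ⊕ Fin b → ℝ) (hz : z = Sum.elim (fun _ => 1) (fun _ => β)) (a : ℝ)
    (ha : a = Fintype.card (TL k p q)) :
    ∑ v, z v * ∑ w, (if (G0 k p q b).Adj v w then z w else 0) =
      a * (k - 1) + 2 * a * b * β + 2 * β ^ 2 := by
  subst hz
  rw [Fintype.sum_sum_type]
  have e1 : ∀ x : TL k p q, ∑ w : TL k p q ⊕ Fin b, (if (G0 k p q b).Adj (Sum.inl x) w then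
      (Sum.elim (fun _ => (1 : ℝ)) (fun _ => β) w : ℝ) else 0) = (k - 1) + b * β := by
    intro x
    rw [Fintype.sum_sum_type]
    have := ownL_deg k p q hk x
    simp only [G0_ll, G0_lr, G0_rl, G0_rr, Sum.elim_inl, Sum.elim_inr, if_true]
    rw [Finset.sum_boole, this]
    push_cast [Nat.cast_sub (show 1 ≤ k by omega)]
    simp
  have e2 : ∀ i : Fin b, ∑ w : TL k p q ⊕ Fin b, (if (G0 k p q b).Adj (Sum.inr i) w then
      (Sum.elim (fun _ => (1 : ℝ)) (fun _ => β) w : ℝ) else 0) =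
      a + ((if i = ⟨0, by omega⟩ then β else 0) + (if i = ⟨1, by omega⟩ then β else 0)) := by
    intro i
    rw [Fintype.sum_sum_type]
    simp only [G0_ll, G0_lr, G0_rl, G0_rr, Sum.elim_inl, Sum.elim_inr, if_true]
    congr 1
    · rw [ha]; simp
    · by_cases h0 : i = ⟨0, by omega⟩
      · subst h0
        rw [Finset.sum_eq_single ⟨1, by omega⟩]
        · simp
        · intro j _ hj
          rw [if_neg]
          rintro (h | h)
          · exact hj (Fin.ext h.2)
          · simp at h
        · simp
      · by_cases h1 : i = ⟨1, by omega⟩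
        · subst h1
          rw [Finset.sum_eq_single ⟨0, by omega⟩]
          · simp
          · intro j _ hj
            rw [if_neg]
            rintro (h | h)
            · simp at h
            · exact hj (Fin.ext h.2)
          · simp
        · rw [if_neg h0, if_neg h1, Finset.sum_eq_zero]
          · simp
          · intro j _
            rw [if_neg]
            rintro (h | h)
            · exact h0 (Fin.ext h.1)
            · exact h1 (Fin.ext h.1)
  simp only [e1, e2, Sum.elim_inl, Sum.elim_inr]
  simp only [← Finset.mul_sum, Finset.sum_add_distrib]
  simp only [Finset.sum_ite_eq', mem_univ, if_true, Finset.sum_const, nsmul_eq_mul, Finset.card_univ,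
    Fintype.card_fin, one_mul]
  rw [← ha]
  ring

theorem model_lower (k p q b n : ℕ) (hk : 3 ≤ k) (hb : 2 ≤ b) (a : ℕ) (ha : a = p * k + q * ((k - 1) * 2))
    (hn : n = a + b) (β : ℝ) :
    ∃ H : SimpleGraph (Fin n), WheelFree (2 * k + 1) H ∧
      a * ((k : ℝ) - 1) + 2 * a * b * β + 2 * β ^ 2 ≤ lam1 H * (a + b * β ^ 2) := by
  have hcard : Fintype.card (TL k p q ⊕ Fin b) = n := by
    simp [hn, ha]
  have hcardL : Fintype.card (TL k p q) = a := by simp [ha]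
  let e := Fintype.equivFinOfCardEq hcard
  refine ⟨(G0 k p q b).comap e.symm, ?_, ?_⟩
  · rintro ⟨f, hf⟩
    apply G0_free k p q b hk hb
    exact ⟨f.trans e.symm.toEmbedding, fun x y hxy => hf x y hxy⟩
  · set z : TL k p q ⊕ Fin b → ℝ := Sum.elim (fun _ => 1) (fun _ => β) with hz
    have h := rayleigh_le ((G0 k p q b).comap e.symm) (fun v => z (e.symm v))
    have h1 := G0_quad k p q b hk hb β z hz (a : ℝ) (by rw [hcardL])
    have e1 : ∑ v, z (e.symm v) * ∑ w ∈ nb ((G0 k p q b).comap e.symm) v, z (e.symm w) =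
        ∑ v, z v * ∑ w, (if (G0 k p q b).Adj v w then z w else 0) := by
      rw [← Equiv.sum_comp e.symm]
      refine Finset.sum_congr rfl (fun v _ => ?_)
      congr 1
      rw [← Equiv.sum_comp e.symm, nb, Finset.sum_filter]
      rfl
    have e2 : ∑ v, z (e.symm v) ^ 2 = a + b * β ^ 2 := by
      rw [Equiv.sum_comp e.symm (fun v => z v ^ 2), Fintype.sum_sum_type, ← hcardL]
      simp [hz]
    rw [e1, h1, e2] at h
    exact h

theorem lower_bound (k : ℕ) (hk : 3 ≤ k) : ∃ N : ℕ, ∀ n, N ≤ n → ∃ H : SimpleGraph (Fin n),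
    WheelFree (2 * k + 1) H ∧ ∃ ρ : ℝ, ((k : ℝ) - 1) ≤ ρ ∧
      (n : ℝ) ^ 2 / 4 + 3 / 4 ≤ ρ ^ 2 - (k - 1) * ρ ∧ ρ ≤ lam1 H := by
  refine ⟨4 * k * k + 8 * k + 60, fun n hn => ?_⟩
  set c := (n + 1) / 4 with hc
  have hck : k * k ≤ c := by
    rw [hc, Nat.le_div_iff_mul_le (by norm_num)]; nlinarith
  set Q := c / (k - 1) with hQ
  set r := c % (k - 1) with hr
  have hdec : (k - 1) * Q + r = c := Nat.div_add_mod c (k - 1)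
  have hrlt : r < k - 1 := Nat.mod_lt _ (by omega)
  have hQr : r ≤ Q := by
    have : k - 1 ≤ Q := by
      rw [hQ, Nat.le_div_iff_mul_le (by omega)]
      exact le_trans (Nat.mul_le_mul (Nat.sub_le _ _) (Nat.sub_le _ _)) hck
    omega
  have hc2 : 2 * c ≤ n := by omega
  have hb2 : 2 ≤ n - 2 * c := by omega
  have ha : 2 * c = (2 * r) * k + (Q - r) * ((k - 1) * 2) := by
    obtain ⟨m, rfl⟩ : ∃ m, k = m + 1 := ⟨k - 1, by omega⟩
    obtain ⟨t, ht⟩ : ∃ t, Q = r + t := ⟨Q - r, by omega⟩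
    rw [← hdec, ht]
    simp only [Nat.add_sub_cancel, Nat.add_sub_cancel_left]
    ring
  set D : ℝ := (k : ℝ) - 1 with hD
  have hD2 : 2 ≤ D := by
    have : (3 : ℝ) ≤ k := by exact_mod_cast hk
    linarith
  set A : ℝ := ((2 * c : ℕ) : ℝ) with hA
  set B : ℝ := ((n - 2 * c : ℕ) : ℝ) with hB
  have hAB : A + B = n := by
    rw [hA, hB, ← Nat.cast_add]; congr 1; omega
  have hA1 : A - n / 2 ≤ 1 := by
    have h : (2 * (2 * c : ℕ) : ℝ) ≤ n + 2 := by exact_mod_cast (by omega : 2 * (2 * c) ≤ n + 2)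
    rw [hA]; linarith
  have hA2 : -1 ≤ A - n / 2 := by
    have h : (n : ℝ) ≤ (2 * (2 * c : ℕ) : ℝ) + 2 := by
      exact_mod_cast (by omega : n ≤ 2 * (2 * c) + 2)
    rw [hA]; linarith
  have hprod : (n : ℝ) ^ 2 / 4 - 1 ≤ A * B := by
    have : B = n - A := by linarith
    rw [this]; nlinarith
  have hnD : 8 * D + 60 ≤ (n : ℝ) := by
    have h : ((4 * k * k + 8 * k + 60 : ℕ) : ℝ) ≤ n := by exact_mod_cast hn
    push_cast at h
    nlinarith
  set R := Real.sqrt (D ^ 2 / 4 + A * B + 7 / 4) with hR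
  have hRsq : R ^ 2 = D ^ 2 / 4 + A * B + 7 / 4 := Real.sq_sqrt (by nlinarith)
  have hRlow : (n : ℝ) / 2 - 1 ≤ R := by
    apply Real.le_sqrt_of_sq_le
    nlinarith
  set ρ := D / 2 + R with hρ
  have hρ2 : ρ ^ 2 - D * ρ = A * B + 7 / 4 := by
    have : ρ ^ 2 - D * ρ = R ^ 2 - D ^ 2 / 4 := by rw [hρ]; ring
    rw [this, hRsq]; ring
  have hBpos : 0 < B := by linarith
  have hApos : 0 < A := by linarith
  set β := (ρ - D) / B with hβ
  have hβB : B * β = ρ - D := by rw [hβ]; field_simp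
  have hβ1 : 7 / 8 ≤ β := by
    rw [hβ, le_div_iff₀ hBpos]
    have : B ≤ n / 2 + 1 := by linarith
    rw [hρ]; linarith
  obtain ⟨H, hH, hlam⟩ := model_lower k (2 * r) (Q - r) (n - 2 * c) n hk hb2 (2 * c) ha (by omega) β
  refine ⟨H, hH, ρ, by rw [hρ]; linarith, by linarith, ?_⟩
  have hpos : 0 < A + B * β ^ 2 := by positivity
  apply le_of_mul_le_mul_right _ hpos
  refine le_trans ?_ hlam
  have key : A * D + 2 * A * B * β + 2 * β ^ 2 - ρ * (A + B * β ^ 2) =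
      β * (A * B - (ρ ^ 2 - D * ρ) + 2 * β) := by
    have h5 : A * (ρ - D) = A * (B * β) := by rw [hβB]
    have h6 : ρ * β * (B * β) = ρ * β * (ρ - D) := by rw [hβB]
    linear_combination -h5 - h6
  have : 0 ≤ β * (A * B - (ρ ^ 2 - D * ρ) + 2 * β) := by
    apply mul_nonneg (by linarith)
    rw [hρ2]; linarith
  linarith

end ConstrPart

section StabPart
open scoped Classical
open Finset

/-- number of neighbours of `v` in `A` -/
noncomputable def dg {n : ℕ} (G : SimpleGraph (Fin n)) (A : Finset (Fin n)) (v : Fin n) : ℕ :=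
  (A.filter (fun w => G.Adj v w)).card

/-- number of non-neighbours of `v` in `A` -/
noncomputable def ms {n : ℕ} (G : SimpleGraph (Fin n)) (A : Finset (Fin n)) (v : Fin n) : ℕ :=
  (A.filter (fun w => ¬ G.Adj v w)).card

theorem dg_add_ms {n : ℕ} (G : SimpleGraph (Fin n)) (A : Finset (Fin n)) (v : Fin n) :
    dg G A v + ms G A v = A.card :=
  Finset.card_filter_add_card_filter_not (s := A) (fun w => G.Adj v w)

theorem dg_comm {n : ℕ} (G : SimpleGraph (Fin n)) (A B : Finset (Fin n)) :
    ∑ v ∈ A, dg G B v = ∑ w ∈ B, dg G A w := sum_filter_comm G A B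

/-- common neighbours in `A` of the set `Q` -/
noncomputable def cn {n : ℕ} (G : SimpleGraph (Fin n)) (A Q : Finset (Fin n)) : Finset (Fin n) :=
  A.filter (fun s => ∀ q ∈ Q, G.Adj q s)

theorem cn_card {n : ℕ} (G : SimpleGraph (Fin n)) (A Q : Finset (Fin n)) :
    A.card ≤ (cn G A Q).card + ∑ q ∈ Q, ms G A q := by
  have h1 : A ⊆ cn G A Q ∪ Q.biUnion (fun q => A.filter (fun w => ¬ G.Adj q w)) := by
    intro s hs
    simp only [mem_union, mem_biUnion, cn, mem_filter]
    by_cases h : ∀ q ∈ Q, G.Adj q s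
    · exact Or.inl ⟨hs, h⟩
    · push Not at h
      obtain ⟨q, hq, hqs⟩ := h
      exact Or.inr ⟨q, hq, hs, hqs⟩
  calc A.card ≤ _ := card_le_card h1
    _ ≤ _ := card_union_le _ _
    _ ≤ _ := by gcongr; exact card_biUnion_le

theorem cn_card_le {n : ℕ} (G : SimpleGraph (Fin n)) (A Q : Finset (Fin n)) (m : ℝ)
    (h : ∀ q ∈ Q, (ms G A q : ℝ) ≤ m) :
    (A.card : ℝ) - Q.card * m ≤ (cn G A Q).card := by
  have h1 : (A.card : ℝ) ≤ (cn G A Q).card + ∑ q ∈ Q, (ms G A q : ℝ) := by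
    exact_mod_cast cn_card G A Q
  have h2 := Finset.sum_le_card_nsmul Q (fun q => (ms G A q : ℝ)) m h
  rw [nsmul_eq_mul] at h2
  linarith

theorem nb_card_split {n : ℕ} (G : SimpleGraph (Fin n)) (A : Finset (Fin n)) (v : Fin n) :
    (nb G v).card = dg G A v + dg G Aᶜ v := by
  rw [nb, dg, dg, ← card_union_of_disjoint, ← filter_union]
  · congr 2
    exact (union_compl A).symm
  · exact disjoint_filter_filter disjoint_compl_right

/-- sum over neighbours in `A` -/
theorem nb_sum_split {n : ℕ} (G : SimpleGraph (Fin n)) (A : Finset (Fin n)) (v : Fin n)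
    (x : Fin n → ℝ) :
    ∑ w ∈ nb G v, x w = ∑ w ∈ A.filter (fun w => G.Adj v w), x w +
      ∑ w ∈ Aᶜ.filter (fun w => G.Adj v w), x w := by
  rw [nb, ← sum_union, ← filter_union, union_compl]
  exact disjoint_filter_filter disjoint_compl_right

/-- size of the cut -/
noncomputable def cutS {n : ℕ} (G : SimpleGraph (Fin n)) (S : Finset (Fin n)) : ℕ :=
  ∑ v ∈ S, dg G Sᶜ v

theorem cutS_compl {n : ℕ} (G : SimpleGraph (Fin n)) (S : Finset (Fin n)) :
    cutS G Sᶜ = cutS G S := by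
  unfold cutS
  rw [compl_compl, dg_comm]

theorem cutS_erase {n : ℕ} (G : SimpleGraph (Fin n)) (S : Finset (Fin n)) (v : Fin n) (hv : v ∈ S) :
    cutS G (S.erase v) + dg G Sᶜ v = cutS G S + dg G S v := by
  unfold cutS
  have h1 : ∀ w ∈ S.erase v, dg G (S.erase v)ᶜ w = dg G Sᶜ w + if G.Adj v w then 1 else 0 := by
    intro w hw
    unfold dg
    have : (S.erase v)ᶜ = insert v Sᶜ := by
      ext z; simp only [mem_compl, mem_erase, mem_insert]; tauto
    rw [this, filter_insert]
    by_cases h : G.Adj w v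
    · rw [if_pos h, if_pos h.symm, card_insert_of_notMem]
      simp [hv]
    · rw [if_neg h, if_neg (fun h' => h h'.symm), add_zero]
  rw [sum_congr rfl h1, sum_add_distrib, ← card_filter]
  have h2 : (S.erase v).filter (fun w => G.Adj v w) = S.filter (fun w => G.Adj v w) := by
    ext z
    simp only [mem_filter, mem_erase]
    constructor
    · rintro ⟨⟨_, a⟩, b⟩; exact ⟨a, b⟩
    · rintro ⟨a, b⟩; exact ⟨⟨b.ne', a⟩, b⟩
  rw [h2]
  have h3 := Finset.sum_erase_add S (fun w => dg G Sᶜ w) hv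
  unfold dg at *
  omega

theorem maxcut_deg {n : ℕ} (G : SimpleGraph (Fin n)) (S : Finset (Fin n))
    (hS : ∀ S', cutS G S' ≤ cutS G S) (v : Fin n) (hv : v ∈ S) : dg G S v ≤ dg G Sᶜ v := by
  have := cutS_erase G S v hv
  have := hS (S.erase v)
  omega

theorem stage1 (k : ℕ) (hk : 3 ≤ k) (ε : ℝ) (hε : 0 < ε) : ∃ N : ℕ, ∀ n, N ≤ n →
    ∀ G : SimpleGraph (Fin n), WheelFree (2 * k + 1) G → (n : ℝ) / 2 ≤ lam1 G →
    ∃ S, (∀ S', cutS G S' ≤ cutS G S) ∧ (n : ℝ) ^ 2 / 4 - ε * n ^ 2 ≤ cutS G S := by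
  obtain ⟨N, hN⟩ := kst k (by omega) ε hε
  refine ⟨N + 1, fun n hn G hG hlam => ?_⟩
  obtain ⟨x, hx0, hx1, ⟨u, hu⟩, hx⟩ := exists_perron (by omega) G
  have hnot := fun h => hN n (by omega) G (nb G u) h
  have hin : ∑ v ∈ nb G u, ((nb G u).filter (fun w => G.Adj v w)).card < ε * (n : ℝ) ^ 2 := by
    by_contra hcon
    push Not at hcon
    obtain ⟨X, Y, hX, hY, hXc, hYc, hXY⟩ := hnot (by exact_mod_cast hcon)
    exact hG (wheel_of_K1kk (by omega) G u X Y hXc hYc hXY (fun a ha => mem_nb.mp (hX ha))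
      (fun a ha => mem_nb.mp (hY ha)))
  obtain ⟨S, -, hS⟩ := Finset.exists_max_image (univ : Finset (Finset (Fin n))) (cutS G)
    ⟨∅, mem_univ _⟩
  refine ⟨S, fun S' => hS S' (mem_univ _), ?_⟩
  have h1 : lam1 G ^ 2 = ∑ v ∈ nb G u, ∑ w ∈ nb G v, x w := by
    rw [sum_congr rfl (fun v _ => hx v), ← mul_sum, hx, hu]; ring
  have h2 : ∑ v ∈ nb G u, ∑ w ∈ nb G v, x w ≤ ∑ v ∈ nb G u, ((nb G v).card : ℝ) := by
    refine sum_le_sum (fun v _ => ?_)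
    have := Finset.sum_le_card_nsmul (nb G v) x 1 (fun w _ => hx1 w)
    simpa using this
  have h3 : ∑ v ∈ nb G u, ((nb G v).card : ℝ) =
      (∑ v ∈ nb G u, ((nb G u).filter (fun w => G.Adj v w)).card : ℕ) + (cutS G (nb G u) : ℝ) := by
    rw [cutS, ← Nat.cast_add, ← sum_add_distrib, Nat.cast_sum]
    refine sum_congr rfl (fun v _ => ?_)
    rw [nb_card_split G (nb G u) v]; rfl
  have h4 : (cutS G (nb G u) : ℝ) ≤ cutS G S := by exact_mod_cast hS _ (mem_univ _)
  have h5 : (n : ℝ) ^ 2 / 4 ≤ lam1 G ^ 2 := by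
    have : (0 : ℝ) ≤ n := Nat.cast_nonneg n
    nlinarith
  push_cast at hin h3
  linarith

/-- bad vertices: many missing neighbours on the other side -/
noncomputable def bad {n : ℕ} (G : SimpleGraph (Fin n)) (S : Finset (Fin n)) (m : ℝ) :
    Finset (Fin n) := S.filter (fun v => m < (ms G Sᶜ v : ℝ))

theorem own_small {n : ℕ} {k : ℕ} (hk : 3 ≤ k) (G : SimpleGraph (Fin n))
    (hG : WheelFree (2 * k + 1) G) (S : Finset (Fin n)) (δ : ℝ) (hδn : 1 ≤ δ * n)
    (hb : ((bad G S (δ * n)).card : ℝ) ≤ δ * n)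
    (hmax : ∀ v ∈ S, dg G S v ≤ dg G Sᶜ v) (v : Fin n) (hv : v ∈ S) :
    (dg G S v : ℝ) ≤ 2 * k * δ * n := by
  by_contra hcon
  push Not at hcon
  have hk' : (3 : ℝ) ≤ k := by exact_mod_cast hk
  have h1 : (dg G S v : ℝ) ≤ ((S.filter (fun w => G.Adj v w)) \ bad G S (δ * n)).card +
      (bad G S (δ * n)).card := by
    rw [← Nat.cast_add]
    have := Finset.card_le_card_sdiff_add_card (t := bad G S (δ * n))
      (s := S.filter (fun w => G.Adj v w))
    unfold dg; exact_mod_cast this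
  have h2 : k ≤ ((S.filter (fun w => G.Adj v w)) \ bad G S (δ * n)).card := by
    have : (k : ℝ) ≤ ((S.filter (fun w => G.Adj v w)) \ bad G S (δ * n)).card := by nlinarith
    exact_mod_cast this
  obtain ⟨X, hXs, hXc⟩ := Finset.exists_subset_card_eq h2
  set A := Sᶜ.filter (fun w => G.Adj v w) with hA
  have hAc : (A.card : ℝ) = dg G Sᶜ v := rfl
  have h3 := cn_card_le G A X (δ * n) (by
    intro q hq
    have hq' := hXs hq
    simp only [mem_sdiff, mem_filter, bad, not_and, not_lt] at hq'
    refine le_trans ?_ (hq'.2 hq'.1.1)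
    have : ms G A q ≤ ms G Sᶜ q := card_le_card (filter_subset_filter _ (filter_subset _ _))
    exact_mod_cast this)
  have h4 : (dg G S v : ℝ) ≤ dg G Sᶜ v := by exact_mod_cast hmax v hv
  have h5 : k ≤ (cn G A X).card := by
    have : (k : ℝ) ≤ (cn G A X).card := by
      rw [hXc] at h3; nlinarith
    exact_mod_cast this
  obtain ⟨Y, hYs, hYc⟩ := Finset.exists_subset_card_eq h5
  refine hG (wheel_of_K1kk (by omega) G v X Y hXc hYc ?_ ?_ ?_)
  · intro a ha b hb
    exact (mem_filter.mp (hYs hb)).2 a ha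
  · intro a ha
    exact (mem_filter.mp (mem_sdiff.mp (hXs ha)).1).2
  · intro a ha
    exact (mem_filter.mp (mem_filter.mp (hYs ha)).1).2

theorem swap_side {n : ℕ} {k : ℕ} (G : SimpleGraph (Fin n))
    (hG : IsSpexWheel (2 * k + 1) G) (x : Fin n → ℝ) (hx0 : ∀ v, 0 ≤ x v)
    (hx : ∀ v, ∑ w ∈ nb G v, x w = lam1 G * x v) (A Q : Finset (Fin n)) (m : ℝ) (hm : 0 ≤ m)
    (hQ : ∀ q ∈ Q, (ms G A q : ℝ) ≤ m) (hA : (2 * k + 1) * (m + 1) < (A.card : ℝ))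
    (v : Fin n) (hv : v ∉ Q) : ∑ w ∈ Q, x w ≤ lam1 G * x v := by
  refine swap_ineq (2 * k + 1) G hG x hx0 hx v Q hv ?_
  refine swap_free (2 * k + 1) G v Q hG.1 ?_
  intro Q' hQ' Z hQc hZc
  have h1 := cn_card_le G A Q' m (fun q hq => hQ q (hQ' hq))
  have hQc' : (Q'.card : ℝ) ≤ 2 * k + 1 := by exact_mod_cast hQc
  have hZc' : (Z.card : ℝ) ≤ 2 * k + 1 := by exact_mod_cast hZc
  have h2 : Z.card < (cn G A Q').card := by
    have : (Z.card : ℝ) < (cn G A Q').card := by nlinarith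
    exact_mod_cast this
  obtain ⟨s, hs, hsZ⟩ := Finset.exists_mem_notMem_of_card_lt_card h2
  exact ⟨s, hsZ, fun q hq => ((mem_filter.mp hs).2 q hq).symm⟩

theorem sum_le_card' {n : ℕ} (A : Finset (Fin n)) (x : Fin n → ℝ) (hx1 : ∀ v, x v ≤ 1) :
    ∑ w ∈ A, x w ≤ A.card := by
  have := Finset.sum_le_card_nsmul A x 1 (fun w _ => hx1 w)
  simpa using this

/-- one-sided version of the stability step: the vertex of weight one lies in `S` -/
theorem stage2_aux {n : ℕ} {k : ℕ} (hk : 3 ≤ k) (G : SimpleGraph (Fin n))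
    (hG : IsSpexWheel (2 * k + 1) G) (hlam : (n : ℝ) / 2 ≤ lam1 G)
    (x : Fin n → ℝ) (hx0 : ∀ v, 0 ≤ x v) (hx1 : ∀ v, x v ≤ 1)
    (hx : ∀ v, ∑ w ∈ nb G v, x w = lam1 G * x v) (S : Finset (Fin n)) (γ δ : ℝ) (hγ : 0 < γ)
    (hγ1 : γ ≤ 1 / 28)
    (hδ : γ = 2 * k * δ) (hn : 8 * (2 * (k : ℝ) + 1) < n)
    (hS1 : (n : ℝ) / 2 - δ * n ≤ S.card) (hS2 : (n : ℝ) / 2 - δ * n ≤ Sᶜ.card)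
    (hb1 : ((bad G S (δ * n)).card : ℝ) ≤ δ * n) (hb2 : ((bad G Sᶜ (δ * n)).card : ℝ) ≤ δ * n)
    (ho1 : ∀ v ∈ S, (dg G S v : ℝ) ≤ γ * n) (ho2 : ∀ v ∈ Sᶜ, (dg G Sᶜ v : ℝ) ≤ γ * n)
    (u : Fin n) (hu : x u = 1) (huS : u ∈ S) :
    (∀ v, 1 - 14 * γ ≤ x v) ∧ (∀ v ∈ S, (ms G Sᶜ v : ℝ) ≤ 7 * γ * n) ∧
      (∀ v ∈ Sᶜ, (ms G S v : ℝ) ≤ 7 * γ * n) := by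
  have hk' : (3 : ℝ) ≤ k := by exact_mod_cast hk
  have hn0 : (0 : ℝ) < n := by linarith
  have hδ0 : 0 < δ := by
    by_contra h; push Not at h; nlinarith
  have hδγ : 6 * δ ≤ γ := by nlinarith
  have hδn : δ * n ≤ γ * n / 6 := by nlinarith
  have hδn0 : 0 ≤ δ * n := by positivity
  have hcard : (S.card : ℝ) + Sᶜ.card = n := by
    have := Finset.card_add_card_compl S
    rw [Fintype.card_fin] at this
    exact_mod_cast this
  set T := Sᶜ with hT
  set lam := lam1 G with hlamdef
  set τ := ∑ w ∈ T, x w with hτ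
  have hfl : ∀ (A : Finset (Fin n)) v, ∑ w ∈ A.filter (fun w => G.Adj v w), x w ≤ dg G A v :=
    fun A v => sum_le_card' _ x hx1
  have hfsub : ∀ (A : Finset (Fin n)) v, ∑ w ∈ A.filter (fun w => G.Adj v w), x w ≤ ∑ w ∈ A, x w :=
    fun A v => sum_le_sum_of_subset_of_nonneg (filter_subset _ _) (fun w _ _ => hx0 w)
  -- bounds for lam and tau
  have hτ1 : lam - γ * n ≤ τ := by
    have h := hx u
    rw [hu, nb_sum_split G S u x] at h
    have h1 := hfl S u
    have h2 := hfsub T u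
    have h3 := ho1 u huS
    linarith
  have hτ2 : τ ≤ T.card := sum_le_card' T x hx1
  have hlam2 : lam ≤ n / 2 + 2 * γ * n := by linarith
  -- good vertices in S
  have hgood : ∀ w ∈ S \ bad G S (δ * n), 1 - 8 * γ ≤ x w := by
    intro w hw
    rw [mem_sdiff] at hw
    have hms : (ms G T w : ℝ) ≤ δ * n := by
      by_contra hc
      push Not at hc
      exact hw.2 (mem_filter.mpr ⟨hw.1, hc⟩)
    have h := hx w
    rw [nb_sum_split G S w x] at h
    have h1 : 0 ≤ ∑ z ∈ S.filter (fun z => G.Adj w z), x z := sum_nonneg (fun z _ => hx0 z)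
    have h2 := Finset.sum_filter_add_sum_filter_not T (fun z => G.Adj w z) x
    have h3 : ∑ z ∈ T.filter (fun z => ¬ G.Adj w z), x z ≤ ms G T w := sum_le_card' _ x hx1
    have h4 : (n : ℝ) / 2 - 2 * γ * n ≤ lam * x w := by linarith
    have h5 : lam * x w ≤ (n / 2 + 2 * γ * n) * x w := mul_le_mul_of_nonneg_right hlam2 (hx0 w)
    by_contra hc
    push Not at hc
    have h6 : (n / 2 + 2 * γ * n) * x w ≤ (n / 2 + 2 * γ * n) * (1 - 8 * γ) := by
      apply mul_le_mul_of_nonneg_left hc.le; positivity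
    have h7 : (0:ℝ) < γ * γ * n := by positivity
    nlinarith
  have hσ : (n : ℝ) / 2 - 5 * γ * n ≤ ∑ w ∈ S \ bad G S (δ * n), x w := by
    have h1 := Finset.card_nsmul_le_sum (S \ bad G S (δ * n)) x (1 - 8 * γ) hgood
    rw [nsmul_eq_mul] at h1
    refine le_trans ?_ h1
    have h2 : (S.card : ℝ) ≤ (S \ bad G S (δ * n)).card + (bad G S (δ * n)).card := by
      exact_mod_cast Finset.card_le_card_sdiff_add_card
    have h3 : (n : ℝ) / 2 - γ * n ≤ (S \ bad G S (δ * n)).card := by linarith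
    have h4 : ((n : ℝ) / 2 - γ * n) * (1 - 8 * γ) ≤ (S \ bad G S (δ * n)).card * (1 - 8 * γ) := by
      apply mul_le_mul_of_nonneg_right h3; linarith
    have h7 : (0:ℝ) < γ * γ * n := by positivity
    nlinarith
  have hτg : (n : ℝ) / 2 - 5 * γ * n ≤ ∑ w ∈ T \ bad G T (δ * n), x w := by
    have h1 := Finset.sum_sdiff (s₁ := bad G T (δ * n)) (s₂ := T) (f := x) (filter_subset _ _)
    have h2 := sum_le_card' (bad G T (δ * n)) x hx1
    have : 0 < γ * n := by positivity
    linarith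
  have hbig : ∀ A : Finset (Fin n), (n : ℝ) / 2 - δ * n ≤ A.card →
      (2 * k + 1) * (δ * n + 1) < (A.card : ℝ) := by
    intro A hA
    have h1 : (2 * k + 1) * (δ * n + 1) = γ * n + δ * n + (2 * k + 1) := by rw [hδ]; ring
    rw [h1]
    nlinarith
  have hsw : ∀ v, (n : ℝ) / 2 - 5 * γ * n ≤ lam * x v := by
    intro v
    by_cases hv : v ∈ S
    · refine le_trans hτg ?_
      refine swap_side G hG x hx0 hx S (T \ bad G T (δ * n)) (δ * n) hδn0 ?_ (hbig S hS1) v ?_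
      · intro q hq
        rw [mem_sdiff] at hq
        by_contra hc
        push Not at hc
        refine hq.2 (mem_filter.mpr ⟨hq.1, ?_⟩)
        rw [hT, compl_compl]; exact hc
      · simp [hT, hv]
    · refine le_trans hσ ?_
      refine swap_side G hG x hx0 hx T (S \ bad G S (δ * n)) (δ * n) hδn0 ?_ (hbig T hS2) v ?_
      · intro q hq
        rw [mem_sdiff] at hq
        by_contra hc
        push Not at hc
        exact hq.2 (mem_filter.mpr ⟨hq.1, hc⟩)
      · simp [hv]
  have hfin : ∀ v, (n : ℝ) / 2 - 5 * γ * n ≤ dg G S v + dg G T v := by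
    intro v
    refine (hsw v).trans ?_
    rw [← hx v, nb_sum_split G S v x]
    exact add_le_add (hfl S v) (hfl T v)
  refine ⟨fun v => ?_, fun v hv => ?_, fun v hv => ?_⟩
  · have h4 := hsw v
    have h5 : lam * x v ≤ (n / 2 + 2 * γ * n) * x v := mul_le_mul_of_nonneg_right hlam2 (hx0 v)
    by_contra hc
    push Not at hc
    have h6 : (n / 2 + 2 * γ * n) * x v ≤ (n / 2 + 2 * γ * n) * (1 - 14 * γ) := by
      apply mul_le_mul_of_nonneg_left hc.le; positivity
    have h7 : (0:ℝ) < γ * γ * n := by positivity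
    nlinarith
  · have h1 := hfin v
    have h2 := ho1 v hv
    have h3 : (dg G T v : ℝ) + ms G T v = T.card := by exact_mod_cast dg_add_ms G T v
    have : 0 < γ * n := by positivity
    linarith
  · have h1 := hfin v
    have h2 := ho2 v hv
    have h3 : (dg G S v : ℝ) + ms G S v = S.card := by exact_mod_cast dg_add_ms G S v
    have : 0 < γ * n := by positivity
    linarith

theorem cut_miss {n : ℕ} (G : SimpleGraph (Fin n)) (S : Finset (Fin n)) (δ : ℝ) (hδ : 0 < δ)
    (hn : 0 < n) (hcut : (n : ℝ) ^ 2 / 4 - δ ^ 2 * n ^ 2 ≤ cutS G S) :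
    (n : ℝ) / 2 - δ * n ≤ S.card ∧ ((bad G S (δ * n)).card : ℝ) ≤ δ * n := by
  have hcard : (S.card : ℝ) + Sᶜ.card = n := by
    have := Finset.card_add_card_compl S
    rw [Fintype.card_fin] at this
    exact_mod_cast this
  have hn0 : (0 : ℝ) < n := by exact_mod_cast hn
  have h1 : (cutS G S : ℝ) + ∑ v ∈ S, (ms G Sᶜ v : ℝ) = S.card * Sᶜ.card := by
    have : cutS G S + ∑ v ∈ S, ms G Sᶜ v = S.card * Sᶜ.card := by
      rw [cutS, ← sum_add_distrib, sum_congr rfl (fun v _ => dg_add_ms G Sᶜ v), sum_const,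
        smul_eq_mul]
    exact_mod_cast this
  have h2 : (0 : ℝ) ≤ ∑ v ∈ S, (ms G Sᶜ v : ℝ) := sum_nonneg (fun _ _ => Nat.cast_nonneg _)
  have e : (S.card : ℝ) * Sᶜ.card = n ^ 2 / 4 - (S.card - n / 2) ^ 2 := by
    rw [← hcard]; ring
  have hδn : 0 < δ * n := by positivity
  constructor
  · have : ((S.card : ℝ) - n / 2) ^ 2 ≤ (δ * n) ^ 2 := by rw [mul_pow]; linarith
    have := abs_le_of_sq_le_sq this hδn.le
    linarith [(abs_le.mp this).1]
  · have h3 : ∑ v ∈ S, (ms G Sᶜ v : ℝ) ≤ (δ * n) ^ 2 := by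
      rw [mul_pow]; nlinarith [sq_nonneg ((S.card : ℝ) - n / 2)]
    have h4 : ∑ v ∈ bad G S (δ * n), (ms G Sᶜ v : ℝ) ≤ ∑ v ∈ S, (ms G Sᶜ v : ℝ) :=
      sum_le_sum_of_subset_of_nonneg (filter_subset _ _) (fun _ _ _ => Nat.cast_nonneg _)
    have h5 := Finset.card_nsmul_le_sum (bad G S (δ * n)) (fun v => (ms G Sᶜ v : ℝ)) (δ * n)
      (fun v hv => (mem_filter.mp hv).2.le)
    rw [nsmul_eq_mul] at h5
    have h6 : ((bad G S (δ * n)).card : ℝ) * (δ * n) ≤ (δ * n) * (δ * n) := by nlinarith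
    exact le_of_mul_le_mul_right h6 hδn

theorem stage2 (k : ℕ) (hk : 3 ≤ k) (η : ℝ) (hη : 0 < η) (hη1 : η ≤ 1 / 2) : ∃ N : ℕ, ∀ n, N ≤ n →
    ∀ G : SimpleGraph (Fin n), IsSpexWheel (2 * k + 1) G → (n : ℝ) / 2 ≤ lam1 G →
    ∀ x : Fin n → ℝ, (∀ v, 0 ≤ x v) → (∀ v, x v ≤ 1) → (∃ u, x u = 1) →
    (∀ v, ∑ w ∈ nb G v, x w = lam1 G * x v) →
    ∃ S : Finset (Fin n), (∀ v, 1 - η ≤ x v) ∧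
      (n : ℝ) / 2 - η * n ≤ S.card ∧ (n : ℝ) / 2 - η * n ≤ Sᶜ.card ∧
      (∀ v ∈ S, (ms G Sᶜ v : ℝ) ≤ η * n) ∧ (∀ v ∈ Sᶜ, (ms G S v : ℝ) ≤ η * n) := by
  have hk' : (3 : ℝ) ≤ k := by exact_mod_cast hk
  set γ := η / 14 with hγ
  set δ := γ / (2 * k) with hδ
  have hγ0 : 0 < γ := by positivity
  have hδ0 : 0 < δ := by positivity
  have hγδ : γ = 2 * k * δ := by rw [hδ]; field_simp
  have hδη : δ ≤ η := by nlinarith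
  obtain ⟨N, hN⟩ := stage1 k hk (δ ^ 2) (by positivity)
  obtain ⟨N2, hN2⟩ := exists_nat_gt (1 / δ)
  refine ⟨N + N2 + 16 * k + 9, fun n hn G hG hlam x hx0 hx1 hxu hx => ?_⟩
  obtain ⟨u, hu⟩ := hxu
  obtain ⟨S, hmax, hcut⟩ := hN n (by omega) G hG.1 hlam
  have hn0 : 0 < n := by omega
  have hn0' : (0 : ℝ) < n := by exact_mod_cast hn0
  have hδn : 1 ≤ δ * n := by
    have h1 : (N2 : ℝ) ≤ n := by exact_mod_cast (by omega)
    have h2 : 1 / δ < n := by linarith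
    rw [div_lt_iff₀ hδ0] at h2; linarith
  have hn8 : 8 * (2 * (k : ℝ) + 1) < n := by
    have : ((16 * k + 9 : ℕ) : ℝ) ≤ n := by exact_mod_cast (by omega)
    push_cast at this; linarith
  obtain ⟨hS1, hb1⟩ := cut_miss G S δ hδ0 hn0 hcut
  obtain ⟨hS2, hb2⟩ := cut_miss G Sᶜ δ hδ0 hn0 (by rw [cutS_compl]; exact hcut)
  have hmax2 : ∀ S', cutS G S' ≤ cutS G Sᶜ := by intro S'; rw [cutS_compl]; exact hmax S'
  have ho1 := own_small hk G hG.1 S δ hδn hb1 (maxcut_deg G S hmax)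
  have ho2 := own_small hk G hG.1 Sᶜ δ hδn hb2 (maxcut_deg G Sᶜ hmax2)
  rw [← hγδ] at ho1 ho2
  have hηn : δ * n ≤ η * n := by nlinarith
  have h7 : 7 * γ * n ≤ η * n := by rw [hγ]; nlinarith
  by_cases huS : u ∈ S
  · obtain ⟨a1, a2, a3⟩ := stage2_aux hk G hG hlam x hx0 hx1 hx S γ δ hγ0 (by linarith) hγδ hn8
      hS1 hS2 hb1 hb2 ho1 ho2 u hu huS
    exact ⟨S, fun v => by have := a1 v; linarith, by linarith, by linarith,
      fun v hv => (a2 v hv).trans h7, fun v hv => (a3 v hv).trans h7⟩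
  · obtain ⟨a1, a2, a3⟩ := stage2_aux hk G hG hlam x hx0 hx1 hx Sᶜ γ δ hγ0 (by linarith) hγδ hn8
      hS2 (by rw [compl_compl]; exact hS1) hb2 (by rw [compl_compl]; exact hb1) ho2
      (by rw [compl_compl]; exact ho1) u hu (by simpa using huS)
    rw [compl_compl] at a2 a3
    exact ⟨S, fun v => by have := a1 v; linarith, by linarith, by linarith,
      fun v hv => (a3 v hv).trans h7, fun v hv => (a2 v hv).trans h7⟩

end StabPart

section SettPart
open scoped Classical
open Finset

/-- The situation after the stability steps: a partition `S`, `Sᶜ` with all vertices regular. -/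
structure Sett (k : ℕ) (η M : ℝ) {n : ℕ} (G : SimpleGraph (Fin n)) (x : Fin n → ℝ)
    (S : Finset (Fin n)) : Prop where
  hk : 3 ≤ k
  spex : IsSpexWheel (2 * k + 1) G
  eta0 : 0 < η
  eta : η * (100 * ((k : ℝ) + 2)) ≤ 1
  x1 : ∀ v, x v ≤ 1
  xl : ∀ v, 1 - η ≤ x v
  eig : ∀ v, ∑ w ∈ nb G v, x w = lam1 G * x v
  lamk : (k : ℝ) ≤ lam1 G
  lamn : (n : ℝ) / 2 ≤ lam1 G
  lam2 : (n : ℝ) ^ 2 / 4 + 3 / 4 ≤ lam1 G ^ 2 - (k - 1) * lam1 G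
  size1 : (n : ℝ) / 2 - η * n ≤ S.card
  size2 : (n : ℝ) / 2 - η * n ≤ Sᶜ.card
  own1 : ∀ v ∈ S, dg G S v ≤ k - 1
  own2 : ∀ v ∈ Sᶜ, dg G Sᶜ v ≤ k - 1
  ms1 : ∀ v ∈ S, ms G Sᶜ v ≤ dg G S v
  ms2 : ∀ v ∈ Sᶜ, ms G S v ≤ dg G Sᶜ v
  big : M ≤ n
  M0 : 100 ≤ M

theorem Sett.compl {k : ℕ} {η M : ℝ} {n : ℕ} {G : SimpleGraph (Fin n)} {x : Fin n → ℝ}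
    {S : Finset (Fin n)} (h : Sett k η M G x S) : Sett k η M G x Sᶜ :=
  { hk := h.hk, spex := h.spex, eta0 := h.eta0, eta := h.eta, x1 := h.x1, xl := h.xl, eig := h.eig,
    lamk := h.lamk, lamn := h.lamn, lam2 := h.lam2, size1 := h.size2,
    size2 := by rw [compl_compl]; exact h.size1
    own1 := h.own2
    own2 := by rw [compl_compl]; exact h.own1
    ms1 := by rw [compl_compl]; exact h.ms2
    ms2 := by rw [compl_compl]; exact h.ms1
    big := h.big, M0 := h.M0 }

theorem own_le {n : ℕ} {k : ℕ} (hk : 3 ≤ k) (G : SimpleGraph (Fin n))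
    (hG : WheelFree (2 * k + 1) G) (S : Finset (Fin n)) (η : ℝ) (hη0 : 0 < η)
    (hη : η * (100 * ((k : ℝ) + 2)) ≤ 1) (hn : 8 * (k : ℝ) ≤ n)
    (hs : (n : ℝ) / 2 - η * n ≤ Sᶜ.card)
    (hm : ∀ v ∈ S, (ms G Sᶜ v : ℝ) ≤ η * n) (v : Fin n) (hv : v ∈ S) : dg G S v ≤ k - 1 := by
  by_contra hcon
  have h1 : k ≤ (S.filter (fun w => G.Adj v w)).card := by
    have : k ≤ dg G S v := by omega
    exact this
  obtain ⟨X, hXs, hXc⟩ := Finset.exists_subset_card_eq h1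
  set A := Sᶜ.filter (fun w => G.Adj v w) with hA
  have h3 := cn_card_le G A X (η * n) (by
    intro q hq
    refine le_trans ?_ (hm q (mem_filter.mp (hXs hq)).1)
    have : ms G A q ≤ ms G Sᶜ q := card_le_card (filter_subset_filter _ (filter_subset _ _))
    exact_mod_cast this)
  have h4 : (A.card : ℝ) + ms G Sᶜ v = Sᶜ.card := by exact_mod_cast dg_add_ms G Sᶜ v
  have h5 := hm v hv
  have h6 : k ≤ (cn G A X).card := by
    have : (k : ℝ) ≤ (cn G A X).card := by
      rw [hXc] at h3
      have hn0 : (0 : ℝ) ≤ n := Nat.cast_nonneg n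
      have : η * (100 * ((k : ℝ) + 2)) * n ≤ 1 * n := mul_le_mul_of_nonneg_right hη hn0
      nlinarith
    exact_mod_cast this
  obtain ⟨Y, hYs, hYc⟩ := Finset.exists_subset_card_eq h6
  refine hG (wheel_of_K1kk (by omega) G v X Y hXc hYc ?_ ?_ ?_)
  · intro a ha b hb
    exact (mem_filter.mp (hYs hb)).2 a ha
  · intro a ha
    exact (mem_filter.mp (hXs ha)).2
  · intro a ha
    exact (mem_filter.mp (mem_filter.mp (hYs ha)).1).2

theorem ms_le {n : ℕ} {k : ℕ} (hk : 3 ≤ k) (G : SimpleGraph (Fin n))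
    (hG : IsSpexWheel (2 * k + 1) G) (x : Fin n → ℝ) (hx1 : ∀ v, x v ≤ 1)
    (S : Finset (Fin n)) (η : ℝ) (hη0 : 0 < η)
    (hη : η * (100 * ((k : ℝ) + 2)) ≤ 1) (hn : 16 * (k : ℝ) ≤ n)
    (hxl : ∀ v, 1 - η ≤ x v) (hx : ∀ v, ∑ w ∈ nb G v, x w = lam1 G * x v)
    (hs : (n : ℝ) / 2 - η * n ≤ S.card)
    (hm : ∀ v ∈ Sᶜ, (ms G S v : ℝ) ≤ η * n) (v : Fin n) (hv : v ∈ S) (ho : dg G S v ≤ k - 1) :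
    ms G Sᶜ v ≤ dg G S v := by
  have hk' : (3 : ℝ) ≤ k := by exact_mod_cast hk
  have hx0 : ∀ v, 0 ≤ x v := fun v => by have := hxl v; nlinarith
  have hn0 : (0 : ℝ) ≤ n := Nat.cast_nonneg n
  have h1 := swap_side G hG x hx0 hx S Sᶜ (η * n) (by positivity) hm (by
    have : η * (100 * ((k : ℝ) + 2)) * n ≤ 1 * n := mul_le_mul_of_nonneg_right hη hn0
    nlinarith) v (by simpa using hv)
  rw [← hx v, nb_sum_split G S v x] at h1
  have h2 := Finset.sum_filter_add_sum_filter_not Sᶜ (fun z => G.Adj v z) x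
  have h3 : ∑ w ∈ S.filter (fun w => G.Adj v w), x w ≤ dg G S v := sum_le_card' _ x hx1
  have h4 := Finset.card_nsmul_le_sum (Sᶜ.filter (fun w => ¬ G.Adj v w)) x (1 - η)
    (fun w _ => hxl w)
  rw [nsmul_eq_mul] at h4
  have h5 : (ms G Sᶜ v : ℝ) * (1 - η) ≤ dg G S v := by
    have : (ms G Sᶜ v : ℝ) * (1 - η) ≤ _ := h4
    linarith
  by_contra hc
  push Not at hc
  have h6 : (dg G S v : ℝ) + 1 ≤ ms G Sᶜ v := by exact_mod_cast hc
  have h7 : (dg G S v : ℝ) + 1 ≤ k := by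
    exact_mod_cast (by omega : dg G S v + 1 ≤ k)
  nlinarith

theorem exists_sett (k : ℕ) (hk : 3 ≤ k) (M : ℝ) (hM : 100 ≤ M) : ∃ N : ℕ, ∀ n, N ≤ n →
    ∀ G : SimpleGraph (Fin n), IsSpexWheel (2 * k + 1) G → ∃ x S,
      Sett k (1 / (100 * ((k : ℝ) + 2))) M G x S := by
  have hk' : (3 : ℝ) ≤ k := by exact_mod_cast hk
  set η : ℝ := 1 / (100 * ((k : ℝ) + 2)) with hη
  have hη0 : 0 < η := by positivity
  have hηk : η * (100 * ((k : ℝ) + 2)) ≤ 1 := by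
    rw [hη]; field_simp; exact le_refl _
  obtain ⟨N1, hN1⟩ := lower_bound k hk
  obtain ⟨N2, hN2⟩ := stage2 k hk η hη0 (by nlinarith)
  obtain ⟨N3, hN3⟩ := exists_nat_ge M
  refine ⟨N1 + N2 + N3 + 16 * k + 1, fun n hn G hG => ?_⟩
  obtain ⟨H, hH, ρ, hρ1, hρ2, hρ3⟩ := hN1 n (by omega)
  have hlam : ρ ≤ lam1 G := hρ3.trans (hG.2 H hH)
  have hn0 : (0 : ℝ) ≤ n := Nat.cast_nonneg n
  have hn16 : 16 * (k : ℝ) ≤ n := by exact_mod_cast (by omega : 16 * k ≤ n)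
  have hl2 : (n : ℝ) ^ 2 / 4 + 3 / 4 ≤ lam1 G ^ 2 - (k - 1) * lam1 G := by nlinarith
  have hl0 : 0 ≤ lam1 G := by linarith
  have hln : (n : ℝ) / 2 ≤ lam1 G := by
    by_contra hc
    push Not at hc
    nlinarith
  obtain ⟨x, hx0, hx1, hu, hx⟩ := exists_perron (by omega) G
  obtain ⟨S, hxl, hs1, hs2, hm1, hm2⟩ := hN2 n (by omega) G hG hln x hx0 hx1 hu hx
  have ho1 := own_le hk G hG.1 S η hη0 hηk (by linarith) hs2 hm1
  have ho2 := own_le hk G hG.1 Sᶜ η hη0 hηk (by linarith) (by rw [compl_compl]; exact hs1)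
    (by rw [compl_compl]; exact hm2)
  refine ⟨x, S, ?_⟩
  exact
  { hk := hk, spex := hG, eta0 := hη0, eta := hηk, x1 := hx1, xl := hxl, eig := hx
    lamk := by linarith
    lamn := hln
    lam2 := hl2
    size1 := hs1
    size2 := hs2
    own1 := ho1
    own2 := ho2
    ms1 := fun v hv => ms_le hk G hG x hx1 S η hη0 hηk hn16 hxl hx hs1 hm2 v hv (ho1 v hv)
    ms2 := fun v hv => by
      have := ms_le hk G hG x hx1 Sᶜ η hη0 hηk hn16 hxl hx hs2
        (by rw [compl_compl]; exact hm1) v hv (ho2 v hv)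
      rw [compl_compl] at this
      exact this
    big := hN3.trans (by exact_mod_cast (by omega))
    M0 := hM }

theorem dbl {n : ℕ} (G : SimpleGraph (Fin n)) (A B : Finset (Fin n)) (x : Fin n → ℝ) :
    ∑ v ∈ A, ∑ w ∈ B.filter (fun w => G.Adj v w), x w = ∑ w ∈ B, (dg G A w : ℝ) * x w := by
  simp only [sum_filter]
  rw [sum_comm]
  refine sum_congr rfl (fun w _ => ?_)
  rw [← sum_filter, sum_const, nsmul_eq_mul, dg]
  congr 3
  ext v
  simp only [mem_filter, G.adj_comm]

section
variable {k : ℕ} {η M : ℝ} {n : ℕ} {G : SimpleGraph (Fin n)} {x : Fin n → ℝ} {S : Finset (Fin n)}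

theorem Sett.eq1 (h : Sett k η M G x S) :
    lam1 G * ∑ v ∈ S, x v = ∑ v ∈ S, (dg G S v : ℝ) * x v + S.card * ∑ v ∈ Sᶜ, x v -
      ∑ v ∈ Sᶜ, (ms G S v : ℝ) * x v := by
  rw [mul_sum, ← sum_congr rfl (fun v _ => h.eig v),
    sum_congr rfl (fun v _ => nb_sum_split G S v x), sum_add_distrib, dbl, dbl, mul_sum,
    add_sub_assoc, ← sum_sub_distrib]
  congr 1
  refine sum_congr rfl (fun v _ => ?_)
  rw [← dg_add_ms G S v]
  push_cast; ring

theorem Sett.x0 (h : Sett k η M G x S) (v : Fin n) : 0 ≤ x v := by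
  have h1 := h.xl v
  have hk' : (3 : ℝ) ≤ k := by exact_mod_cast h.hk
  have := h.eta
  have := h.eta0
  nlinarith

theorem Sett.eta' (h : Sett k η M G x S) : η ≤ 1 / 500 := by
  have hk' : (3 : ℝ) ≤ k := by exact_mod_cast h.hk
  have := h.eta
  have := h.eta0
  nlinarith

theorem Sett.sig (h : Sett k η M G x S) : (n : ℝ) / 4 ≤ ∑ v ∈ S, x v := by
  have h4 := Finset.card_nsmul_le_sum S x (1 - η) (fun w _ => h.xl w)
  rw [nsmul_eq_mul] at h4
  have h1 := h.size1
  have h2 := h.eta'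
  have h0 := h.eta0
  have hn0 : (0 : ℝ) ≤ n := Nat.cast_nonneg n
  refine le_trans ?_ h4
  have h3 : (n : ℝ) * (3 / 8) ≤ S.card := by nlinarith
  nlinarith

theorem Sett.npos (h : Sett k η M G x S) : (100 : ℝ) ≤ n := h.M0.trans h.big

theorem Sett.cards (_h : Sett k η M G x S) : (S.card : ℝ) + Sᶜ.card = n := by
  have := Finset.card_add_card_compl S
  rw [Fintype.card_fin] at this
  exact_mod_cast this

theorem Sett.avg (h : Sett k η M G x S) (p q : ℝ) (hp : 0 ≤ p) (hq : 0 ≤ q) (hpq : p + q ≤ k - 1)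
    (h1 : ∑ v ∈ S, (dg G S v : ℝ) * x v ≤ p * ∑ v ∈ S, x v)
    (h2 : ∑ v ∈ Sᶜ, (dg G Sᶜ v : ℝ) * x v ≤ q * ∑ v ∈ Sᶜ, x v) : False := by
  have e1 := h.eq1
  have e2 := h.compl.eq1
  rw [compl_compl] at e2
  have hn := h.npos
  have s1 := h.sig
  have s2 := h.compl.sig
  have m1 : 0 ≤ ∑ v ∈ Sᶜ, (ms G S v : ℝ) * x v :=
    sum_nonneg (fun v _ => mul_nonneg (Nat.cast_nonneg _) (h.x0 v))
  have m2 : 0 ≤ ∑ v ∈ S, (ms G Sᶜ v : ℝ) * x v :=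
    sum_nonneg (fun v _ => mul_nonneg (Nat.cast_nonneg _) (h.x0 v))
  have hc := h.cards
  have hl := h.lam2
  have hlk := h.lamk
  set σ := ∑ v ∈ S, x v
  set τ := ∑ v ∈ Sᶜ, x v
  set l := lam1 G
  have f1 : (l - p) * σ ≤ S.card * τ := by linarith
  have f2 : (l - q) * τ ≤ Sᶜ.card * σ := by linarith
  have hσ : 0 < σ := by linarith
  have hτ : 0 < τ := by linarith
  have f3 : ((l - p) * σ) * ((l - q) * τ) ≤ (S.card * τ) * (Sᶜ.card * σ) := by
    apply mul_le_mul f1 f2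
    · apply mul_nonneg _ hτ.le; linarith
    · positivity
  have f4 : ((l - p) * (l - q)) * (σ * τ) ≤ (S.card * Sᶜ.card) * (σ * τ) := by linarith
  have f5 := le_of_mul_le_mul_right f4 (by positivity)
  have f6 : (S.card : ℝ) * Sᶜ.card ≤ n ^ 2 / 4 := by
    rw [← hc]; nlinarith [sq_nonneg ((S.card : ℝ) - Sᶜ.card)]
  have f7 : (p + q) * l ≤ (k - 1) * l := by
    apply mul_le_mul_of_nonneg_right hpq
    have : (0 : ℝ) ≤ k := Nat.cast_nonneg k
    linarith
  have f8 : 0 ≤ p * q := mul_nonneg hp hq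
  nlinarith

/-- many disjoint paths on `l` vertices inside `T` -/
def Rich (G : SimpleGraph (Fin n)) (T : Finset (Fin n)) (C l : ℕ) : Prop :=
  ∀ Z : Finset (Fin n), Z.card ≤ C → ∃ p : List (Fin n), p.length = l ∧ p.Nodup ∧
    p.IsChain G.Adj ∧ ∀ y ∈ p, y ∈ T ∧ y ∉ Z

theorem greedy (T : Finset (Fin n)) (C : ℕ) (Z0 : Finset (Fin n)) :
    ∀ ls : List ℕ, (∀ l ∈ ls, Rich G T C l) → Z0.card + ls.sum ≤ C →
    ∃ P : List (List (Fin n)), P.map List.length = ls ∧ P.flatten.Nodup ∧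
      (∀ p ∈ P, p.IsChain G.Adj) ∧ ∀ y ∈ P.flatten, y ∈ T ∧ y ∉ Z0
  | [], _, _ => ⟨[], by simp⟩
  | l :: ls, hr, hC => by
    simp only [List.sum_cons] at hC
    obtain ⟨P, hP1, hP2, hP3, hP4⟩ := greedy T C Z0 ls
      (fun l hl => hr l (List.mem_cons_of_mem _ hl)) (by omega)
    have hlen : P.flatten.length = ls.sum := by rw [List.length_flatten, hP1]
    obtain ⟨p, hp1, hp2, hp3, hp4⟩ := hr l List.mem_cons_self (Z0 ∪ P.flatten.toFinset) (by
      have := card_union_le Z0 P.flatten.toFinset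
      have := List.toFinset_card_le P.flatten
      omega)
    refine ⟨p :: P, by simp [hp1, hP1], ?_, ?_, ?_⟩
    · rw [List.flatten_cons, List.nodup_append]
      refine ⟨hp2, hP2, ?_⟩
      rintro a ha b hb rfl
      exact (hp4 a ha).2 (mem_union_right _ (List.mem_toFinset.mpr hb))
    · intro q hq
      rcases List.mem_cons.mp hq with rfl | hq
      · exact hp3
      · exact hP3 q hq
    · intro y hy
      rw [List.flatten_cons, List.mem_append] at hy
      rcases hy with hy | hy
      · exact ⟨(hp4 y hy).1, fun hz => (hp4 y hy).2 (mem_union_left _ hz)⟩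
      · exact hP4 y hy

theorem rich_one (T : Finset (Fin n)) (C : ℕ) (hC : C < T.card) : Rich G T C 1 := by
  intro Z hZ
  obtain ⟨s, hs, hsZ⟩ := Finset.exists_mem_notMem_of_card_lt_card (lt_of_le_of_lt hZ hC)
  exact ⟨[s], by simp [hs, hsZ]⟩

theorem Sett.wheel_rich (h : Sett k η M G x S) (C : ℕ) (hC : k * k + 2 * k ≤ C) (w : Fin n)
    (hw : w ∈ S)
    (ls : List ℕ) (hlen : ls.length = dg G S w) (hsum : ls.sum + dg G S w = 2 * k)
    (hls : ∀ l ∈ ls, l ≠ 0 ∧ Rich G Sᶜ C l) : False := by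
  have hk := h.hk
  set X := S.filter (fun z => G.Adj w z) with hX
  set W := insert w X with hW
  have hWS : ∀ z ∈ W, z ∈ S := by
    intro z hz
    rcases mem_insert.mp hz with rfl | hz
    · exact hw
    · exact (mem_filter.mp hz).1
  have hWc : W.card ≤ k := by
    have h1 : W.card ≤ X.card + 1 := card_insert_le w X
    have h2 : X.card ≤ k - 1 := h.own1 w hw
    omega
  set Z0 := W.biUnion (fun z => Sᶜ.filter (fun y => ¬ G.Adj z y)) with hZ0
  have hZc : Z0.card ≤ k * k := by
    refine le_trans (card_biUnion_le_card_mul W _ k ?_) (Nat.mul_le_mul_right k hWc)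
    intro z hz
    have h1 := h.ms1 z (hWS z hz)
    have h2 := h.own1 z (hWS z hz)
    unfold ms at h1
    omega
  obtain ⟨P, hP1, hP2, hP3, hP4⟩ := greedy (G := G) Sᶜ C Z0 ls (fun l hl => (hls l hl).2) (by omega)
  have hadj : ∀ z ∈ W, ∀ y ∈ P.flatten, G.Adj z y := by
    intro z hz y hy
    by_contra hc
    exact (hP4 y hy).2 (mem_biUnion.mpr ⟨z, hz, mem_filter.mpr ⟨(hP4 y hy).1, hc⟩⟩)
  have hPl : P.length = ls.length := by rw [← hP1, List.length_map]
  have hXl : X.toList.length = dg G S w := by rw [length_toList]; rfl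
  refine h.spex.1 (wheel_of_XP (by omega) G w X.toList P (by omega) ?_ (nodup_toList _) hP2 ?_ ?_ ?_ ?_)
  · rw [List.length_flatten, hP1]; omega
  · intro p hp
    refine ⟨hP3 p hp, ?_⟩
    rintro rfl
    have : ([] : List (Fin n)).length ∈ ls := by rw [← hP1]; exact List.mem_map_of_mem hp
    exact (hls _ this).1 rfl
  · intro z hz y hy
    exact hadj z (mem_insert_of_mem (mem_toList.mp hz)) y hy
  · intro z hz
    exact (mem_filter.mp (mem_toList.mp hz)).2
  · intro y hy
    exact hadj w (mem_insert_self _ _) y hy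

theorem Sett.rich2 (h : Sett k η M G x S) (C : ℕ) (hC : k * k + 2 * k ≤ C)
    (hM : (8 * C : ℝ) ≤ M) (hr : Rich G Sᶜ C 2) (w : Fin n) (hw : w ∈ S) : 3 * dg G S w < 2 * k := by
  by_contra hc
  push Not at hc
  have hd := h.own1 w hw
  have hk := h.hk
  have h1 : Rich G Sᶜ C 1 := by
    apply rich_one
    have := h.size2
    have := h.eta'
    have := h.big
    have := h.npos
    have : (C : ℝ) < Sᶜ.card := by nlinarith
    exact_mod_cast this
  refine h.wheel_rich C hC w hw
    (List.replicate (2 * k - 2 * dg G S w) 2 ++ List.replicate (3 * dg G S w - 2 * k) 1) ?_ ?_ ?_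
  · simp; omega
  · simp; omega
  · intro l hl
    rw [List.mem_append, List.mem_replicate, List.mem_replicate] at hl
    rcases hl with ⟨_, rfl⟩ | ⟨_, rfl⟩
    · exact ⟨by omega, hr⟩
    · exact ⟨by omega, h1⟩

theorem Sett.rich3 (h : Sett k η M G x S) (C : ℕ) (hC : k * k + 2 * k ≤ C)
    (hM : (8 * C : ℝ) ≤ M) (hr : Rich G Sᶜ C 3) (w : Fin n) (hw : w ∈ S) : 2 * dg G S w < k := by
  by_contra hc
  push Not at hc
  have hd := h.own1 w hw
  have hk := h.hk
  have h1 : Rich G Sᶜ C 1 := by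
    apply rich_one
    have := h.size2
    have := h.eta'
    have := h.big
    have := h.npos
    have : (C : ℝ) < Sᶜ.card := by nlinarith
    exact_mod_cast this
  refine h.wheel_rich C hC w hw
    (List.replicate (k - dg G S w) 3 ++ List.replicate (2 * dg G S w - k) 1) ?_ ?_ ?_
  · simp; omega
  · simp; omega
  · intro l hl
    rw [List.mem_append, List.mem_replicate, List.mem_replicate] at hl
    rcases hl with ⟨_, rfl⟩ | ⟨_, rfl⟩
    · exact ⟨by omega, hr⟩
    · exact ⟨by omega, h1⟩

/-- if there are few disjoint edges inside `S` then there are few edges -/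
theorem Sett.not_rich2 (h : Sett k η M G x S) (C : ℕ) (hr : ¬ Rich G S C 2) :
    ∑ v ∈ S, dg G S v ≤ 2 * C * k := by
  unfold Rich at hr
  push Not at hr
  obtain ⟨Z, hZc, hZ⟩ := hr
  have hit : ∀ a ∈ S, ∀ b ∈ S, G.Adj a b → a ∉ Z → b ∈ Z := by
    intro a ha b hb hab haZ
    obtain ⟨y, hy, hyZ⟩ := hZ [a, b] rfl (by simp [hab.ne]) (by simp [hab])
    rcases List.mem_cons.mp hy with rfl | hy
    · exact absurd (hyZ ha) haZ
    · rw [List.mem_singleton] at hy; subst hy; exact hyZ hb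
  have h1 : ∀ B ⊆ S, B.card ≤ C → ∑ v ∈ B, dg G S v ≤ C * k := by
    intro B hB hBc
    refine le_trans (sum_le_card_nsmul B _ k (fun v hv => ?_)) ?_
    · have := h.own1 v (hB hv); omega
    · rw [smul_eq_mul]; exact Nat.mul_le_mul_right k hBc
  have hSZ : (S ∩ Z).card ≤ C := (card_le_card inter_subset_right).trans hZc
  have h2 : ∑ v ∈ S \ Z, dg G S v ≤ ∑ v ∈ S \ Z, dg G (S ∩ Z) v := by
    refine sum_le_sum (fun v hv => card_le_card ?_)
    intro b hb
    rw [mem_sdiff] at hv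
    rw [mem_filter] at hb ⊢
    exact ⟨mem_inter.mpr ⟨hb.1, hit v hv.1 b hb.1 hb.2 hv.2⟩, hb.2⟩
  rw [dg_comm G (S \ Z) (S ∩ Z)] at h2
  have h3 : ∑ v ∈ S ∩ Z, dg G (S \ Z) v ≤ ∑ v ∈ S ∩ Z, dg G S v :=
    sum_le_sum (fun v _ => card_le_card (filter_subset_filter _ sdiff_subset))
  have h4 := h1 (S ∩ Z) inter_subset_left hSZ
  have h5 := Finset.sum_inter_add_sum_sdiff S Z (fun v => dg G S v)
  rw [← h5, mul_assoc]
  omega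

theorem Sett.not_rich3 (h : Sett k η M G x S) (C : ℕ) (hr : ¬ Rich G S C 3) :
    (S.filter (fun v => 2 ≤ dg G S v)).card ≤ C * k := by
  unfold Rich at hr
  push Not at hr
  obtain ⟨Z, hZc, hZ⟩ := hr
  have hsub : S.filter (fun v => 2 ≤ dg G S v) ⊆
      (S ∩ Z).biUnion (fun z => insert z (S.filter (fun y => G.Adj z y))) := by
    intro v hv
    rw [mem_filter] at hv
    rw [mem_biUnion]
    by_cases hvZ : v ∈ Z
    · exact ⟨v, mem_inter.mpr ⟨hv.1, hvZ⟩, mem_insert_self _ _⟩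
    · obtain ⟨a, ha, b, hb, hab⟩ := Finset.one_lt_card.mp hv.2
      rw [mem_filter] at ha hb
      obtain ⟨y, hy, hyZ⟩ := hZ [a, v, b] rfl (by simp [hab, ha.2.ne', hb.2.ne])
        (by simp [ha.2.symm, hb.2])
      simp only [List.mem_cons, List.not_mem_nil, or_false] at hy
      rcases hy with rfl | rfl | rfl
      · exact ⟨y, mem_inter.mpr ⟨ha.1, hyZ ha.1⟩, mem_insert_of_mem (mem_filter.mpr ⟨hv.1, ha.2.symm⟩)⟩
      · exact absurd (hyZ hv.1) hvZ
      · exact ⟨y, mem_inter.mpr ⟨hb.1, hyZ hb.1⟩, mem_insert_of_mem (mem_filter.mpr ⟨hv.1, hb.2.symm⟩)⟩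
  refine (card_le_card hsub).trans ?_
  refine le_trans (card_biUnion_le_card_mul _ _ k ?_) ?_
  · intro z hz
    have h1 := h.own1 z (mem_inter.mp hz).1
    have h2 := card_insert_le z (S.filter (fun y => G.Adj z y))
    unfold dg at h1
    have := h.hk
    omega
  · exact Nat.mul_le_mul_right k ((card_le_card inter_subset_right).trans hZc)

theorem Sett.not_rich3' (h : Sett k η M G x S) (C : ℕ) (hr : ¬ Rich G S C 3)
    (hM : (4 * (C * k * k) : ℝ) ≤ M) :
    ∑ v ∈ S, (dg G S v : ℝ) * x v ≤ 2 * ∑ v ∈ S, x v := by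
  have h1 := h.not_rich3 C hr
  set B := S.filter (fun v => 2 ≤ dg G S v) with hB
  have h2 : ∀ v ∈ S, (dg G S v : ℝ) * x v ≤ x v + if 2 ≤ dg G S v then (k : ℝ) else 0 := by
    intro v hv
    have hx0 := h.x0 v
    have hx1 := h.x1 v
    by_cases hd : 2 ≤ dg G S v
    · rw [if_pos hd]
      have : (dg G S v : ℝ) ≤ k := by
        have := h.own1 v hv
        exact_mod_cast (by omega : dg G S v ≤ k)
      have : (0 : ℝ) ≤ dg G S v := Nat.cast_nonneg _
      nlinarith
    · rw [if_neg hd]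
      have : (dg G S v : ℝ) ≤ 1 := by exact_mod_cast (by omega : dg G S v ≤ 1)
      nlinarith
  refine (sum_le_sum h2).trans ?_
  rw [sum_add_distrib, ← sum_filter, sum_const, nsmul_eq_mul]
  have h3 : ((S.filter (fun v => 2 ≤ dg G S v)).card : ℝ) ≤ C * k := by exact_mod_cast h1
  have h4 := h.sig
  have h5 := h.big
  have : (0 : ℝ) ≤ k := Nat.cast_nonneg k
  nlinarith

theorem Sett.le_max (h : Sett k η M G x S) (p : ℝ) (hp : ∀ v ∈ S, (dg G S v : ℝ) ≤ p) :
    ∑ v ∈ S, (dg G S v : ℝ) * x v ≤ p * ∑ v ∈ S, x v := by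
  rw [mul_sum]
  exact sum_le_sum (fun v hv => mul_le_mul_of_nonneg_right (hp v hv) (h.x0 v))

theorem Sett.mid (h : Sett k η M G x S) (hk4 : k ≠ 4) (hk5 : k ≠ 5) (C : ℕ)
    (hC : k * k + 2 * k ≤ C) (hM : (8 * C : ℝ) ≤ M) (hM' : (4 * (C * k * k) : ℝ) ≤ M)
    (hr1 : Rich G S C 2) (hr2 : Rich G Sᶜ C 2) (w : Fin n) (hw : w ∈ S) : 2 * dg G S w < k := by
  by_contra hc
  have hk := h.hk
  by_cases hr3 : Rich G Sᶜ C 3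
  · exact hc (h.rich3 C hC hM hr3 w hw)
  · have hd := h.rich2 C hC hM hr2
    have hk6 : 6 ≤ k := by have := hd w hw; omega
    refine h.avg (k - 3) 2 ?_ (by norm_num) (by linarith) (h.le_max _ ?_)
      (h.compl.not_rich3' C hr3 hM')
    · have : (6 : ℝ) ≤ k := by exact_mod_cast hk6
      linarith
    · intro v hv
      have h1 := hd v hv
      have : ((dg G S v + 3 : ℕ) : ℝ) ≤ k := by exact_mod_cast (by omega)
      push_cast at this
      linarith

theorem Sett.caseA (h : Sett k η M G x S) (hk4 : k ≠ 4) (hk5 : k ≠ 5) (C : ℕ)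
    (hC : k * k + 2 * k ≤ C) (hM : (8 * C : ℝ) ≤ M) (hM' : (4 * (C * k * k) : ℝ) ≤ M) :
    (∑ v ∈ Sᶜ, dg G Sᶜ v ≤ 2 * C * k) ∨ (∑ v ∈ S, dg G S v ≤ 2 * C * k) := by
  by_cases hr1 : Rich G S C 2
  · by_cases hr2 : Rich G Sᶜ C 2
    · exfalso
      have a1 := h.mid hk4 hk5 C hC hM hM' hr1 hr2
      have a2 := h.compl.mid hk4 hk5 C hC hM hM' hr2 (by rw [compl_compl]; exact hr1)
      have hk' : (3 : ℝ) ≤ k := by exact_mod_cast h.hk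
      refine h.avg ((k - 1) / 2) ((k - 1) / 2) (by linarith) (by linarith) (by linarith)
        (h.le_max _ ?_) (h.compl.le_max _ ?_)
      · intro v hv
        have h1 := a1 v hv
        have : ((2 * dg G S v + 1 : ℕ) : ℝ) ≤ k := by exact_mod_cast (by omega)
        push_cast at this
        linarith
      · intro v hv
        have h1 := a2 v hv
        have : ((2 * dg G Sᶜ v + 1 : ℕ) : ℝ) ≤ k := by exact_mod_cast (by omega)
        push_cast at this
        linarith
    · exact Or.inl (h.compl.not_rich2 C hr2)
  · exact Or.inr (h.not_rich2 C hr1)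

end
end SettPart

section FinalPart
open scoped Classical
open Finset

theorem ms_comm {n : ℕ} (G : SimpleGraph (Fin n)) (A B : Finset (Fin n)) :
    ∑ v ∈ A, ms G B v = ∑ w ∈ B, ms G A w := by
  have h1 : ∑ v ∈ A, dg G B v + ∑ v ∈ A, ms G B v = A.card * B.card := by
    rw [← sum_add_distrib, sum_congr rfl (fun v _ => dg_add_ms G B v), sum_const, smul_eq_mul]
  have h2 : ∑ v ∈ B, dg G A v + ∑ v ∈ B, ms G A v = B.card * A.card := by
    rw [← sum_add_distrib, sum_congr rfl (fun v _ => dg_add_ms G A v), sum_const, smul_eq_mul]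
  have h3 := dg_comm G A B
  have h4 := Nat.mul_comm A.card B.card
  omega

variable {k : ℕ} {η M : ℝ} {n : ℕ} {G : SimpleGraph (Fin n)} {x : Fin n → ℝ} {S : Finset (Fin n)}

theorem Sett.hub (h : Sett k η M G x S) (K : ℕ) (hK : ∑ v ∈ Sᶜ, dg G Sᶜ v ≤ K)
    (hM : (8 * (K * k) : ℝ) ≤ M) :
    ∃ w ∈ S, dg G S w = k - 1 ∧ ms G Sᶜ w = 0 ∧ ∀ z ∈ S, G.Adj w z → ms G Sᶜ z = 0 := by
  have hk := h.hk
  have hk' : (3 : ℝ) ≤ k := by exact_mod_cast hk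
  set F := S.filter (fun v => dg G S v = k - 1) with hF
  have hFc : K * k < F.card := by
    by_contra hc
    push Not at hc
    have hKk : ((K * k : ℕ) : ℝ) ≤ n / 8 := by
      push_cast; have := h.big; linarith
    have hFc' : (F.card : ℝ) ≤ n / 8 := le_trans (by exact_mod_cast hc) hKk
    have hKn : (K : ℝ) ≤ n / 8 := by
      refine le_trans ?_ hKk
      exact_mod_cast Nat.le_mul_of_pos_right K (by omega)
    have s1 := h.sig
    have s2 := h.compl.sig
    refine h.avg (k - 1 - 1 / 2) (1 / 2) (by linarith) (by norm_num) (by linarith) ?_ ?_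
    · have h2 : ∀ v ∈ S, (dg G S v : ℝ) * x v ≤ (k - 2) * x v + if dg G S v = k - 1 then 1 else 0 := by
        intro v hv
        have hx0 := h.x0 v
        have hx1 := h.x1 v
        have hd := h.own1 v hv
        by_cases hd2 : dg G S v = k - 1
        · rw [if_pos hd2]
          have : ((dg G S v + 1 : ℕ) : ℝ) ≤ k := by exact_mod_cast (by omega)
          push_cast at this
          nlinarith
        · rw [if_neg hd2]
          have : ((dg G S v + 2 : ℕ) : ℝ) ≤ k := by exact_mod_cast (by omega)
          push_cast at this
          nlinarith
      refine (sum_le_sum h2).trans ?_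
      rw [sum_add_distrib, ← sum_filter, sum_const, nsmul_eq_mul, ← mul_sum]
      linarith
    · have h2 : ∑ v ∈ Sᶜ, (dg G Sᶜ v : ℝ) * x v ≤ ∑ v ∈ Sᶜ, (dg G Sᶜ v : ℝ) :=
        sum_le_sum (fun v _ => mul_le_of_le_one_right (Nat.cast_nonneg _) (h.x1 v))
      have h3 : ∑ v ∈ Sᶜ, (dg G Sᶜ v : ℝ) ≤ K := by exact_mod_cast hK
      linarith
  set B := S.filter (fun v => 0 < ms G Sᶜ v) with hB
  have hBc : B.card ≤ K := by
    have h1 : B.card ≤ ∑ v ∈ B, ms G Sᶜ v := by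
      have := Finset.card_nsmul_le_sum B (fun v => ms G Sᶜ v) 1 (fun v hv => (mem_filter.mp hv).2)
      simpa using this
    have h2 : ∑ v ∈ B, ms G Sᶜ v ≤ ∑ v ∈ S, ms G Sᶜ v :=
      sum_le_sum_of_subset (filter_subset _ _)
    rw [ms_comm G S Sᶜ] at h2
    have h3 : ∑ v ∈ Sᶜ, ms G S v ≤ ∑ v ∈ Sᶜ, dg G Sᶜ v := sum_le_sum h.ms2
    omega
  set B2 := B.biUnion (fun z => insert z (S.filter (fun y => G.Adj z y))) with hB2
  have hB2c : B2.card ≤ K * k := by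
    refine le_trans (card_biUnion_le_card_mul _ _ k ?_) (Nat.mul_le_mul_right k hBc)
    intro z hz
    have h1 := h.own1 z (mem_filter.mp hz).1
    have h2 := card_insert_le z (S.filter (fun y => G.Adj z y))
    unfold dg at h1
    omega
  obtain ⟨w, hwF, hwB⟩ := Finset.exists_mem_notMem_of_card_lt_card (lt_of_le_of_lt hB2c hFc)
  rw [hF, mem_filter] at hwF
  refine ⟨w, hwF.1, hwF.2, ?_, ?_⟩
  · by_contra hc
    exact hwB (mem_biUnion.mpr ⟨w, mem_filter.mpr ⟨hwF.1, Nat.pos_of_ne_zero hc⟩, mem_insert_self _ _⟩)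
  · intro z hz hwz
    by_contra hc
    exact hwB (mem_biUnion.mpr ⟨z, mem_filter.mpr ⟨hz, Nat.pos_of_ne_zero hc⟩,
      mem_insert_of_mem (mem_filter.mpr ⟨hwF.1, hwz.symm⟩)⟩)

theorem ms_zero {A : Finset (Fin n)} {v : Fin n} (h : ms G A v = 0) {w : Fin n} (hw : w ∈ A) :
    G.Adj v w := by
  by_contra hc
  unfold ms at h
  rw [card_eq_zero] at h
  have : w ∈ A.filter (fun w => ¬ G.Adj v w) := mem_filter.mpr ⟨hw, hc⟩
  rw [h] at this
  simp at this

theorem Sett.wheelA (h : Sett k η M G x S) (w : Fin n) (hw : dg G S w = k - 1)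
    (h0 : ms G Sᶜ w = 0) (hz : ∀ z ∈ S, G.Adj w z → ms G Sᶜ z = 0)
    (hM : (16 * k : ℝ) ≤ M)
    (P : List (List (Fin n))) (j : ℕ) (hl : P.length + j = k - 1)
    (ht : P.flatten.length + j = k + 1) (hnd : P.flatten.Nodup)
    (hc : ∀ p ∈ P, p.IsChain G.Adj ∧ p ≠ []) (hT : ∀ y ∈ P.flatten, y ∈ Sᶜ) : False := by
  have hk := h.hk
  have hcard : P.flatten.toFinset.card + k ≤ Sᶜ.card := by
    have h1 := List.toFinset_card_le P.flatten
    have h2 : ((2 * k + 1 : ℕ) : ℝ) ≤ Sᶜ.card := by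
      have := h.size2
      have := h.eta'
      have := h.big
      have := h.npos
      push_cast
      nlinarith
    have h3 : 2 * k + 1 ≤ Sᶜ.card := by exact_mod_cast h2
    omega
  have h5 : j ≤ (Sᶜ \ P.flatten.toFinset).card := by
    have := Finset.card_le_card_sdiff_add_card (s := Sᶜ) (t := P.flatten.toFinset)
    omega
  obtain ⟨J, hJs, hJc⟩ := Finset.exists_subset_card_eq h5
  set Q := J.toList.map (fun y => [y]) with hQ
  have hQf : Q.flatten = J.toList := by
    rw [hQ, ← List.flatMap_def]; simp
  have hJT : ∀ y ∈ J, y ∈ Sᶜ := fun y hy => (mem_sdiff.mp (hJs hy)).1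
  set X := S.filter (fun z => G.Adj w z) with hX
  have hXc : X.card = k - 1 := hw
  have hall : ∀ y ∈ (P ++ Q).flatten, y ∈ Sᶜ := by
    intro y hy
    rw [List.flatten_append, List.mem_append, hQf] at hy
    rcases hy with hy | hy
    · exact hT y hy
    · exact hJT y (mem_toList.mp hy)
  refine h.spex.1 (wheel_of_XP (by omega) G w X.toList (P ++ Q) ?_ ?_ (nodup_toList _) ?_ ?_ ?_ ?_ ?_)
  · simp [hQ, hXc, hJc]; omega
  · rw [List.flatten_append, List.length_append, hQf]; simp only [length_toList]; omega
  · rw [List.flatten_append, hQf, List.nodup_append]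
    refine ⟨hnd, nodup_toList _, ?_⟩
    rintro a ha b hb rfl
    exact (mem_sdiff.mp (hJs (mem_toList.mp hb))).2 (List.mem_toFinset.mpr ha)
  · intro p hp
    rcases List.mem_append.mp hp with hp | hp
    · exact hc p hp
    · rw [hQ, List.mem_map] at hp
      obtain ⟨y, -, rfl⟩ := hp
      simp
  · intro z hzX y hy
    have := mem_filter.mp (mem_toList.mp hzX)
    exact ms_zero (hz z this.1 this.2) (hall y hy)
  · intro z hzX
    exact (mem_filter.mp (mem_toList.mp hzX)).2
  · intro y hy
    exact ms_zero h0 (hall y hy)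

theorem Sett.oneEdge (h : Sett k η M G x S) (w : Fin n) (hw : dg G S w = k - 1)
    (h0 : ms G Sᶜ w = 0) (hz : ∀ z ∈ S, G.Adj w z → ms G Sᶜ z = 0)
    (hM : (16 * k : ℝ) ≤ M) (a b : Fin n) (ha : a ∈ Sᶜ) (hb : b ∈ Sᶜ) (hab : G.Adj a b)
    (c d : Fin n) (hc : c ∈ Sᶜ) (hd : d ∈ Sᶜ) (hcd : G.Adj c d) :
    (c = a ∧ d = b) ∨ (c = b ∧ d = a) := by
  have hk := h.hk
  -- no path on three vertices
  have hP3 : ∀ a b c, a ∈ Sᶜ → b ∈ Sᶜ → c ∈ Sᶜ → G.Adj a b → G.Adj b c → a = c := by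
    intro a b c ha hb hc hab hbc
    by_contra hac
    refine h.wheelA w hw h0 hz hM [[a, b, c]] (k - 2) ?_ ?_ ?_ ?_ ?_
    · simp; omega
    · simp; omega
    · simp [hab.ne, hbc.ne, hac]
    · simp [hab, hbc]
    · simp only [List.flatten_cons, List.flatten_nil, List.append_nil, List.mem_cons,
        List.not_mem_nil, or_false]
      rintro y (rfl | rfl | rfl) <;> assumption
  by_cases h1 : c = a
  · subst h1
    exact Or.inl ⟨rfl, (hP3 d c b hd hc hb hcd.symm hab)⟩
  by_cases h2 : c = b
  · subst h2
    exact Or.inr ⟨rfl, (hP3 a c d ha hc hd hab hcd).symm⟩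
  by_cases h3 : d = a
  · subst h3
    exact absurd (hP3 c d b hc hd hb hcd hab) h2
  by_cases h4 : d = b
  · subst h4
    exact absurd (hP3 c d a hc hd ha hcd hab.symm) h1
  exfalso
  refine h.wheelA w hw h0 hz hM [[a, b], [c, d]] (k - 3) ?_ ?_ ?_ ?_ ?_
  · simp; omega
  · simp; omega
  · simp only [List.flatten_cons, List.flatten_nil, List.append_nil, List.cons_append, List.nil_append,
      List.nodup_cons, List.mem_cons, List.not_mem_nil, or_false, not_or, List.nodup_nil, and_true,
      not_false_eq_true]
    exact ⟨⟨hab.ne, Ne.symm h1, Ne.symm h3⟩, ⟨Ne.symm h2, Ne.symm h4⟩, hcd.ne⟩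
  · simp [hab, hcd]
  · simp only [List.flatten_cons, List.flatten_nil, List.append_nil, List.cons_append, List.nil_append,
      List.mem_cons, List.not_mem_nil, or_false]
    rintro y (rfl | rfl | rfl | rfl) <;> assumption

/-- main identity -/
theorem Sett.identity (h : Sett k η M G x S) :
    (3 / 4 + ((S.card : ℝ) - n / 2) ^ 2) * (1 - η) * S.card ≤
      S.card * (∑ v ∈ Sᶜ, (dg G Sᶜ v : ℝ) * x v) -
      ((1 - η) * S.card + (1 - 2 * η) * (1 - η) * S.card) * (∑ v ∈ S, ms G Sᶜ v : ℕ) -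
      (1 - 2 * η) * (1 - η) * S.card * (∑ v ∈ S, (k - 1 - dg G S v) : ℕ) := by
  have e1 := h.eq1
  have e2 := h.compl.eq1
  rw [compl_compl] at e2
  have hη0 := h.eta0
  have hη1 := h.eta'
  have hc := h.cards
  have hn := h.npos
  have hk' : (3 : ℝ) ≤ k := by exact_mod_cast h.hk
  have hs2 := h.size2
  have hlam := h.lamn
  have hlam2 := h.lam2
  set l := lam1 G
  set σ := ∑ v ∈ S, x v with hσ
  set τ := ∑ v ∈ Sᶜ, x v
  set t := ∑ v ∈ Sᶜ, (dg G Sᶜ v : ℝ) * x v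
  set m1 := ∑ v ∈ Sᶜ, (ms G S v : ℝ) * x v with hm1
  set m2 := ∑ v ∈ S, (ms G Sᶜ v : ℝ) * x v with hm2
  set Mi := ∑ v ∈ S, ms G Sᶜ v with hMi
  set de := ∑ v ∈ S, (k - 1 - dg G S v) with hde
  set f := ∑ v ∈ S, ((k - 1 - dg G S v : ℕ) : ℝ) * x v with hf
  have hfd : ∑ v ∈ S, (dg G S v : ℝ) * x v = (k - 1) * σ - f := by
    rw [hσ, hf, mul_sum, ← sum_sub_distrib]
    refine sum_congr rfl (fun v hv => ?_)
    have := h.own1 v hv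
    have hk := h.hk
    rw [Nat.cast_sub this, Nat.cast_sub (by omega)]
    push_cast; ring
  have hlow : ∀ (A : Finset (Fin n)) (g : Fin n → ℕ),
      (1 - η) * (∑ v ∈ A, g v : ℕ) ≤ ∑ v ∈ A, (g v : ℝ) * x v := by
    intro A g
    rw [Nat.cast_sum, mul_sum]
    refine sum_le_sum (fun v _ => ?_)
    rw [mul_comm]
    exact mul_le_mul_of_nonneg_left (h.xl v) (Nat.cast_nonneg _)
  have b1 : (1 - η) * (Mi : ℝ) ≤ m1 := by
    rw [hMi, ms_comm]; exact hlow Sᶜ _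
  have b2 : (1 - η) * (Mi : ℝ) ≤ m2 := hlow S _
  have b3 : (1 - η) * (de : ℝ) ≤ f := hlow S _
  have b4 : (1 - η) * (S.card : ℝ) ≤ σ := by
    have h4 := Finset.card_nsmul_le_sum S x (1 - η) (fun w _ => h.xl w)
    rw [nsmul_eq_mul, mul_comm] at h4
    exact h4
  set a : ℝ := (S.card : ℝ) with hadef
  have ha : a = n - Sᶜ.card := by linarith
  have hl3 : (1 - 2 * η) * a ≤ l := by
    have : a ≤ n / 2 + η * n := by linarith
    have h6 : (1 - 2 * η) * a ≤ (1 - 2 * η) * (n / 2 + η * n) :=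
      mul_le_mul_of_nonneg_left this (by linarith)
    nlinarith [sq_nonneg η]
  have key : (l ^ 2 - (k - 1) * l - a * Sᶜ.card) * σ = a * (t - m2) - l * (f + m1) := by
    rw [hfd] at e1
    linear_combination l * e1 + a * e2
  have hs : a * Sᶜ.card = n ^ 2 / 4 - (a - n / 2) ^ 2 := by rw [ha]; ring
  have ha0 : 0 ≤ a := Nat.cast_nonneg _
  have hM0 : (0 : ℝ) ≤ Mi := Nat.cast_nonneg _
  have hd0 : (0 : ℝ) ≤ de := Nat.cast_nonneg _
  have g1 : (3 / 4 + (a - n / 2) ^ 2) * ((1 - η) * a) ≤ (l ^ 2 - (k - 1) * l - a * Sᶜ.card) * σ := by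
    apply mul_le_mul _ b4
    · apply mul_nonneg _ ha0; linarith
    · rw [hs]; nlinarith [sq_nonneg (a - n / 2)]
    · rw [hs]; linarith
  have g2 : a * ((1 - η) * Mi) ≤ a * m2 := mul_le_mul_of_nonneg_left b2 ha0
  have g3 : ((1 - 2 * η) * a) * ((1 - η) * (de + Mi)) ≤ l * (f + m1) := by
    apply mul_le_mul hl3 (by linarith)
    · apply mul_nonneg <;> linarith
    · linarith
  rw [key] at g1
  linarith

theorem Sett.final (h : Sett k η M G x S) (K : ℕ) (hK : ∑ v ∈ Sᶜ, dg G Sᶜ v ≤ K)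
    (hM : (8 * (K * k) : ℝ) ≤ M) (hM2 : (16 * k : ℝ) ≤ M) :
    |(S.card : ℝ) - n / 2| ≤ 1 ∧ (∑ v ∈ S, ms G Sᶜ v = 0) ∧ (∑ v ∈ S, (k - 1 - dg G S v) ≤ 1) ∧
    ∃ a ∈ Sᶜ, ∃ b ∈ Sᶜ, G.Adj a b ∧ ∀ c ∈ Sᶜ, ∀ d ∈ Sᶜ, G.Adj c d →
      (c = a ∧ d = b) ∨ (c = b ∧ d = a) := by
  have hid := h.identity
  have hη0 := h.eta0
  have hη1 := h.eta'
  have hn := h.npos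
  have hapos : (0 : ℝ) < S.card := by
    have := h.size1; nlinarith
  set Mi := ∑ v ∈ S, ms G Sᶜ v with hMi
  set de := ∑ v ∈ S, (k - 1 - dg G S v) with hde
  set t := ∑ v ∈ Sᶜ, (dg G Sᶜ v : ℝ) * x v with ht
  have hM0 : (0 : ℝ) ≤ Mi := Nat.cast_nonneg _
  have hd0 : (0 : ℝ) ≤ de := Nat.cast_nonneg _
  have hid2 : (3 / 4 + ((S.card : ℝ) - n / 2) ^ 2) * (1 - η) ≤
      t - ((1 - η) + (1 - 2 * η) * (1 - η)) * Mi - (1 - 2 * η) * (1 - η) * de := by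
    apply le_of_mul_le_mul_right _ hapos
    linarith
  have q0 : (0 : ℝ) ≤ ((S.card : ℝ) - n / 2) ^ 2 := sq_nonneg _
  have q1 : 0.99 ≤ (1 - 2 * η) * (1 - η) := by nlinarith
  have hid3 : (3 / 4 + ((S.card : ℝ) - n / 2) ^ 2) * 0.99 ≤ t - 0.99 * (2 * Mi + de) := by
    have r1 : (3 / 4 + ((S.card : ℝ) - n / 2) ^ 2) * 0.99 ≤
      (3 / 4 + ((S.card : ℝ) - n / 2) ^ 2) * (1 - η) :=
        mul_le_mul_of_nonneg_left (by linarith) (by linarith)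
    have r2 : 0.99 * (de : ℝ) ≤ (1 - 2 * η) * (1 - η) * de := mul_le_mul_of_nonneg_right q1 hd0
    have r3 : (2 * 0.99) * (Mi : ℝ) ≤ ((1 - η) + (1 - 2 * η) * (1 - η)) * Mi :=
      mul_le_mul_of_nonneg_right (by linarith) hM0
    linarith
  have hex : ∃ a ∈ Sᶜ, ∃ b ∈ Sᶜ, G.Adj a b := by
    by_contra hc
    push Not at hc
    have : t = 0 := by
      rw [ht]
      refine sum_eq_zero (fun v hv => ?_)
      have : dg G Sᶜ v = 0 := by
        rw [dg, card_eq_zero, filter_eq_empty_iff]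
        exact fun w hw => hc v hv w hw
      rw [this]; simp
    rw [this] at hid3
    linarith
  obtain ⟨w, hwS, hw, hw0, hwz⟩ := h.hub K hK hM
  obtain ⟨a, ha, b, hb, hab⟩ := hex
  have huniq := h.oneEdge w hw hw0 hwz hM2 a b ha hb hab
  have ht2 : t ≤ 2 := by
    have h1 : t ≤ ∑ v ∈ Sᶜ, (if v ∈ ({a, b} : Finset (Fin n)) then (1 : ℝ) else 0) := by
      rw [ht]
      refine sum_le_sum (fun v hv => ?_)
      by_cases hvab : v ∈ ({a, b} : Finset (Fin n))
      · rw [if_pos hvab]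
        have hle : dg G Sᶜ v ≤ 1 := by
          rw [dg, Finset.card_le_one]
          intro c hc d hd
          rw [mem_filter] at hc hd
          have := hab.ne
          rcases huniq v c hv hc.1 hc.2 with e | e <;> rcases huniq v d hv hd.1 hd.2 with e' | e'
          · rw [e.2, e'.2]
          · exact absurd (e.1.symm.trans e'.1) this
          · exact absurd (e'.1.symm.trans e.1) this
          · rw [e.2, e'.2]
        have hle' : (dg G Sᶜ v : ℝ) ≤ 1 := by exact_mod_cast hle
        exact mul_le_one₀ hle' (h.x0 v) (h.x1 v)
      · rw [if_neg hvab]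
        have : dg G Sᶜ v = 0 := by
          rw [dg, card_eq_zero, filter_eq_empty_iff]
          intro c hc hvc
          apply hvab
          rcases huniq v c hv hc hvc with e | e
          · simp [e.1]
          · simp [e.1]
        rw [this]; simp
    refine h1.trans ?_
    rw [← sum_filter, sum_const, nsmul_eq_mul, mul_one]
    have h2 : (Sᶜ.filter (fun v => v ∈ ({a, b} : Finset (Fin n)))).card ≤ 2 := by
      refine (card_le_card (fun v hv => (mem_filter.mp hv).2)).trans (card_le_two (a := a) (b := b))
    exact_mod_cast h2
  have hsum : 2 * Mi + de ≤ 1 := by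
    by_contra hc
    push Not at hc
    have : (2 : ℝ) ≤ 2 * Mi + de := by exact_mod_cast hc
    linarith
  refine ⟨?_, by omega, by omega, a, ha, b, hb, hab, fun c hc d hd hcd => huniq c d hc hd hcd⟩
  have hs : ((S.card : ℝ) - n / 2) ^ 2 < 9 / 4 := by linarith
  have hs' : |(S.card : ℝ) - n / 2| < 3 / 2 := by
    apply abs_lt_of_sq_lt_sq
    · linarith
    · norm_num
  rw [abs_lt] at hs'
  have h1 : 2 * (S.card : ℤ) - n < 3 := by
    have : 2 * (S.card : ℝ) - n < 3 := by linarith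
    exact_mod_cast this
  have h2 : -3 < 2 * (S.card : ℤ) - n := by
    have : -3 < 2 * (S.card : ℝ) - n := by linarith
    exact_mod_cast this
  have h3 : 2 * (S.card : ℝ) - n ≤ 2 := by exact_mod_cast (by omega : 2 * (S.card : ℤ) - n ≤ 2)
  have h4 : -2 ≤ 2 * (S.card : ℝ) - n := by exact_mod_cast (by omega : -2 ≤ 2 * (S.card : ℤ) - n)
  rw [abs_le]
  constructor <;> linarith

theorem path_wheel (hk : 3 ≤ k) (L : Finset (Fin n)) (a b : Fin n) (ha : a ∈ Lᶜ) (hb : b ∈ Lᶜ)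
    (hab : G.Adj a b) (hcomp : ∀ u ∈ L, ∀ v ∈ Lᶜ, G.Adj u v)
    (hP : ContainsCopy (SimpleGraph.pathGraph (2 * k - 1)) (G.induce (L : Set (Fin n)))) :
    ContainsCopy (wheelGraph (2 * k + 1)) G := by
  obtain ⟨f, hf⟩ := hP
  set l : List (Fin n) := List.ofFn (fun i => (f i : Fin n)) with hl
  have hlL : ∀ y ∈ l, y ∈ L := by
    intro y hy
    rw [hl, List.mem_ofFn] at hy
    obtain ⟨i, rfl⟩ := hy
    exact (f i).2
  have hlen : l.length = 2 * k - 1 := by simp [hl]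
  have hlast : ∀ y ∈ (b :: l).getLast?, y ∈ L := by
    intro y hy
    have hne : l ≠ [] := by
      intro h0; rw [h0] at hlen; simp at hlen; omega
    rw [List.getLast?_cons_of_ne_nil hne] at hy
    exact hlL y (List.mem_of_getLast? hy)
  refine wheel_of_list (by omega) G a (b :: l) ?_ ?_ ?_ ?_ ?_
  · rw [List.length_cons, hlen]; omega
  · rw [List.nodup_cons]
    refine ⟨fun h => (mem_compl.mp hb) (hlL b h), ?_⟩
    rw [hl, List.nodup_ofFn]
    intro i j hij
    exact f.injective (Subtype.ext hij)
  · rw [List.isChain_cons]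
    refine ⟨fun y hy => (hcomp y (hlL y (List.mem_of_mem_head? hy)) b hb).symm, ?_⟩
    rw [List.isChain_iff_getElem]
    intro i hi
    simp only [hl, List.getElem_ofFn]
    have h2 : (SimpleGraph.pathGraph (2 * k - 1)).Adj ⟨i, by omega⟩ ⟨i + 1, by omega⟩ := by
      rw [SimpleGraph.pathGraph_adj]; left; rfl
    exact hf _ _ h2
  · intro y hy z hz
    simp only [List.head?_cons, Option.mem_def, Option.some.injEq] at hz
    subst hz
    exact hcomp y (hlast y hy) _ hb
  · intro y hy
    rcases List.mem_cons.mp hy with rfl | hy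
    · exact hab
    · exact (hcomp y (hlL y hy) a ha).symm

theorem edge_one (R : Finset (Fin n)) (a b : Fin n) (ha : a ∈ R) (hb : b ∈ R)
    (hab : G.Adj a b) (hu : ∀ c ∈ R, ∀ d ∈ R, G.Adj c d → (c = a ∧ d = b) ∨ (c = b ∧ d = a)) :
    edgeCount (G.induce (R : Set (Fin n))) = 1 := by
  unfold edgeCount
  rw [Finset.card_eq_one]
  refine ⟨s(⟨a, ha⟩, ⟨b, hb⟩), ?_⟩
  ext e
  induction e using Sym2.ind with
  | _ c d =>
    rw [SimpleGraph.mem_edgeFinset, SimpleGraph.mem_edgeSet, mem_singleton, Sym2.eq_iff]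
    constructor
    · intro h
      rcases hu c c.2 d d.2 h with e | e
      · exact Or.inl ⟨Subtype.ext e.1, Subtype.ext e.2⟩
      · exact Or.inr ⟨Subtype.ext e.1, Subtype.ext e.2⟩
    · rintro (⟨rfl, rfl⟩ | ⟨rfl, rfl⟩)
      · exact hab
      · exact hab.symm

theorem degIn_eq (A : Finset (Fin n)) (v : Fin n) : degIn G A v = dg G A v := by
  unfold degIn dg
  congr

theorem Sett.conclude (h : Sett k η M G x S) (K : ℕ) (hK : ∑ v ∈ Sᶜ, dg G Sᶜ v ≤ K)
    (hM : (8 * (K * k) : ℝ) ≤ M) (hM2 : (16 * k : ℝ) ≤ M) :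
    ∃ (L R : Finset (Fin n)) (s : ℝ),
        R = Lᶜ ∧
        (L.card : ℝ) = (n : ℝ) / 2 + s ∧ (R.card : ℝ) = (n : ℝ) / 2 - s ∧ |s| ≤ 1 ∧
        (∀ u ∈ L, ∀ v ∈ R, G.Adj u v) ∧
        ((∀ v ∈ L, degIn G L v = k - 1) ∨
          ∃ w ∈ L, degIn G L w = k - 2 ∧ ∀ v ∈ L, v ≠ w → degIn G L v = k - 1) ∧
        ¬ ContainsCopy (SimpleGraph.pathGraph (2 * k - 1)) (G.induce (L : Set (Fin n))) ∧
        edgeCount (G.induce (R : Set (Fin n))) = 1 := by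
  obtain ⟨h1, h2, h3, a, ha, b, hb, hab, hu⟩ := h.final K hK hM hM2
  have hk := h.hk
  have hcomp : ∀ u ∈ S, ∀ v ∈ Sᶜ, G.Adj u v := by
    intro u huS v hv
    rw [sum_eq_zero_iff] at h2
    exact ms_zero (h2 u huS) hv
  have hc := h.cards
  refine ⟨S, Sᶜ, (S.card : ℝ) - n / 2, rfl, by ring, by linarith, h1, hcomp, ?_, ?_,
    edge_one Sᶜ a b ha hb hab hu⟩
  · simp only [degIn_eq]
    by_cases hall : ∀ v ∈ S, dg G S v = k - 1
    · exact Or.inl hall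
    · right
      push Not at hall
      obtain ⟨w, hw, hwd⟩ := hall
      have hwo := h.own1 w hw
      have hsplit := Finset.add_sum_erase S (fun v => k - 1 - dg G S v) hw
      have hz : ∑ v ∈ S.erase w, (k - 1 - dg G S v) = 0 := by omega
      refine ⟨w, hw, by omega, fun v hv hvw => ?_⟩
      rw [sum_eq_zero_iff] at hz
      have := hz v (mem_erase.mpr ⟨hvw, hv⟩)
      have := h.own1 v hv
      omega
  · intro hP
    exact h.spex.1 (path_wheel hk S a b ha hb hab hcomp hP)

theorem spex_main (k : ℕ) (hk : 3 ≤ k) (hk4 : k ≠ 4) (hk5 : k ≠ 5) :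
    ∃ N : ℕ, ∀ n : ℕ, N ≤ n → ∀ G : SimpleGraph (Fin n),
      IsSpexWheel (2 * k + 1) G →
      ∃ (L R : Finset (Fin n)) (s : ℝ),
        R = Lᶜ ∧
        (L.card : ℝ) = (n : ℝ) / 2 + s ∧ (R.card : ℝ) = (n : ℝ) / 2 - s ∧ |s| ≤ 1 ∧
        (∀ u ∈ L, ∀ v ∈ R, G.Adj u v) ∧
        ((∀ v ∈ L, degIn G L v = k - 1) ∨
          ∃ w ∈ L, degIn G L w = k - 2 ∧ ∀ v ∈ L, v ≠ w → degIn G L v = k - 1) ∧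
        ¬ ContainsCopy (SimpleGraph.pathGraph (2 * k - 1)) (G.induce (L : Set (Fin n))) ∧
        edgeCount (G.induce (R : Set (Fin n))) = 1 := by
  set C : ℕ := k * k + 2 * k with hC
  set K : ℕ := 2 * C * k with hK
  set M : ℝ := 100 + 8 * C + 4 * (C * k * k) + 8 * (K * k) + 16 * k with hM
  have p1 : (0 : ℝ) ≤ C := Nat.cast_nonneg _
  have p2 : (0 : ℝ) ≤ k := Nat.cast_nonneg _
  have p3 : (0 : ℝ) ≤ C * k * k := by positivity
  have p4 : (0 : ℝ) ≤ K * k := by positivity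
  obtain ⟨N, hN⟩ := exists_sett k hk M (by linarith)
  refine ⟨N, fun n hn G hG => ?_⟩
  obtain ⟨x, S, h⟩ := hN n hn G hG
  rcases h.caseA hk4 hk5 C le_rfl (by linarith) (by linarith) with hA | hA
  · exact h.conclude K hA (by linarith) (by linarith)
  · exact h.compl.conclude K (by rw [compl_compl]; exact hA) (by linarith) (by linarith)

end FinalPart

/-- Structure of spectral extremal `W_{2k+1}`-free graphs for
`k ≥ 3`, `k ∉ {4,5}`. -/
theorem spex_structure_odd_wheel (k : ℕ) (hk : 3 ≤ k) (hk4 : k ≠ 4) (hk5 : k ≠ 5) :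
    ∃ N : ℕ, ∀ n : ℕ, N ≤ n → ∀ G : SimpleGraph (Fin n),
      IsSpexWheel (2 * k + 1) G →
      ∃ (L R : Finset (Fin n)) (s : ℝ),
        R = Lᶜ ∧
        (L.card : ℝ) = (n : ℝ) / 2 + s ∧ (R.card : ℝ) = (n : ℝ) / 2 - s ∧ |s| ≤ 1 ∧
        (∀ u ∈ L, ∀ v ∈ R, G.Adj u v) ∧
        ((∀ v ∈ L, degIn G L v = k - 1) ∨
          ∃ w ∈ L, degIn G L w = k - 2 ∧ ∀ v ∈ L, v ≠ w → degIn G L v = k - 1) ∧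
        ¬ ContainsCopy (SimpleGraph.pathGraph (2 * k - 1)) (G.induce (L : Set (Fin n))) ∧
        edgeCount (G.induce (R : Set (Fin n))) = 1 := by
  obtain ⟨N, hN⟩ := spex_main k hk hk4 hk5
  refine ⟨N, fun n hn G hG => ?_⟩
  obtain ⟨L, R, s, h1, h2, h3, h4, h5, h6, h7, h8⟩ := hN n hn G hG
  refine ⟨L, R, s, ?_, h2, h3, h4, h5, h6, h7, ?_⟩
  · convert h1
  · convert h8
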